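/- arXiv:math/0212267 — 5 statements merged into one kernel-verified Lean document; each statement's English description precedes it below -/
import Mathlib

section
/- For every even integer n ≥ 1, the number of 123-avoiding involutions of {1,2,…,n} with no fixed points equals the binomial coefficient C(n-1, n/2); for every odd n ≥ 1 this number is 0. -/
/-- The number of fixed points of a permutation of `Fin n`. -/
def fixedPts {n : ℕ} (π : Equiv.Perm (Fin n)) : ℕ :=
  (Finset.univ.filter fun i => π i = i).card

/-- A permutation is an involution if it is its own inverse. -/
def IsInvolution {n : ℕ} (π : Equiv.Perm (Fin n)) : Prop :=
  ∀ i, π (π i) = i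

/-- A permutation of `Fin n` avoids the pattern 123. -/
def Avoids123 {n : ℕ} (π : Equiv.Perm (Fin n)) : Prop :=
  ¬ ∃ i₁ i₂ i₃ : Fin n, i₁ < i₂ ∧ i₂ < i₃ ∧ (π i₁ < π i₂ ∧ π i₂ < π i₃)

/-- `i_n^k(123)`: the number of 123-avoiding involutions of `{1, …, n}` with exactly
`k` fixed points. -/
noncomputable def iCount123 (n k : ℕ) : ℕ :=
  Nat.card {π : Equiv.Perm (Fin n) // IsInvolution π ∧ Avoids123 π ∧ fixedPts π = k}

/-! ### Words -/

def Cnd (d : ℕ) (w : List Bool) : Prop :=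
  ∀ u1 v1 u2 v2 : List Bool, w = u1 ++ false :: v1 → w = u2 ++ false :: v2 →
    u1.count false = v2.count false → v2.count true < d + u1.count true

lemma cnd_true_cons (d : ℕ) (w : List Bool) : Cnd d (true :: w) ↔ Cnd (d + 1) w := by
  constructor
  · intro h u1 v1 u2 v2 h1 h2 hc
    have := h (true :: u1) v1 (true :: u2) v2 (by simp [← h1]) (by simp [← h2]) (by simpa using hc)
    simp at this
    omega
  · intro h u1 v1 u2 v2 h1 h2 hc
    rcases u1 with _ | ⟨a, u1⟩
    · simp at h1
    rcases u2 with _ | ⟨b, u2⟩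
    · simp at h2
    simp at h1 h2
    obtain ⟨rfl, h1⟩ := h1
    obtain ⟨rfl, h2⟩ := h2
    have := h u1 v1 u2 v2 h1 h2 (by simpa using hc)
    simp
    omega

lemma cnd_concat_true (d : ℕ) (w : List Bool) : Cnd (d + 1) (w ++ [true]) ↔ Cnd d w := by
  constructor
  · intro h u1 v1 u2 v2 h1 h2 hc
    have := h u1 (v1 ++ [true]) u2 (v2 ++ [true]) (by simp [h1]) (by simp [h2]) (by simpa using hc)
    simp at this
    omega
  · intro h u1 v1 u2 v2 h1 h2 hc
    rcases List.eq_nil_or_concat v1 with rfl | ⟨v1, a, rfl⟩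
    · simpa using congrArg List.getLast? h1
    rcases List.eq_nil_or_concat v2 with rfl | ⟨v2, b, rfl⟩
    · simpa using congrArg List.getLast? h2
    have e1 : w ++ [true] = (u1 ++ false :: v1) ++ [a] := by simpa using h1
    have e2 : w ++ [true] = (u2 ++ false :: v2) ++ [b] := by simpa using h2
    obtain ⟨g1, f1⟩ := List.append_inj' e1 rfl
    obtain ⟨g2, f2⟩ := List.append_inj' e2 rfl
    simp at f1 f2
    subst f1 f2
    have := h u1 v1 u2 v2 g1 g2 (by simpa using hc)
    simp
    omega

lemma cnd_false_false (d : ℕ) (w : List Bool) :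
    Cnd (d + 1) (false :: (w ++ [false])) ↔ Cnd (d + 1) w := by
  constructor
  · intro h u1 v1 u2 v2 h1 h2 hc
    have := h (false :: u1) (v1 ++ [false]) (false :: u2) (v2 ++ [false])
      (by simp [h1]) (by simp [h2]) (by simpa using hc)
    simp at this
    omega
  · intro h u1 v1 u2 v2 h1 h2 hc
    have c1 := congrArg (List.count false) h1
    have c2 := congrArg (List.count false) h2
    have t1 := congrArg (List.count true) h1
    have t2 := congrArg (List.count true) h2
    simp at c1 c2 t1 t2
    rcases u1 with _ | ⟨a, u1⟩
    · rcases List.eq_nil_or_concat v2 with rfl | ⟨v2, b, rfl⟩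
      · simp
      · have e2 : (false :: w) ++ [false] = (u2 ++ false :: v2) ++ [b] := by simpa using h2
        obtain ⟨e2, f2⟩ := List.append_inj' e2 rfl
        simp at f2
        subst f2
        simp at hc
    simp at h1
    obtain ⟨rfl, h1⟩ := h1
    rcases List.eq_nil_or_concat v2 with rfl | ⟨v2, b, rfl⟩
    · simp at hc
    have e2 : (false :: w) ++ [false] = (u2 ++ false :: v2) ++ [b] := by simpa using h2
    obtain ⟨g2, f2⟩ := List.append_inj' e2 rfl
    simp at f2
    subst f2
    clear e2
    rcases u2 with _ | ⟨b, u2⟩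
    · rcases List.eq_nil_or_concat v1 with rfl | ⟨v1, b, rfl⟩
      · simp at *
        omega
      · have e1 : w ++ [false] = (u1 ++ false :: v1) ++ [b] := by simpa using h1
        obtain ⟨e1, f1⟩ := List.append_inj' e1 rfl
        simp at f1
        subst f1
        simp at *
        omega
    simp at g2
    obtain ⟨rfl, g2⟩ := g2
    rcases List.eq_nil_or_concat v1 with rfl | ⟨v1, b, rfl⟩
    · simp at *
      omega
    have e1 : w ++ [false] = (u1 ++ false :: v1) ++ [b] := by simpa using h1
    obtain ⟨g1, f1⟩ := List.append_inj' e1 rfl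
    have := h u1 v1 u2 v2 g1 g2 (by simpa using hc)
    simp
    omega

def Ls (r d : ℕ) : Set (List Bool) := {w | w.length = r ∧ Even (w.count false) ∧ Cnd d w}
def Rs (r d : ℕ) : Set (List Bool) := {w | false :: w ∈ Ls (r + 1) d}

lemma Ls_finite (r d : ℕ) : (Ls r d).Finite :=
  (List.finite_length_eq Bool r).subset fun _ h => h.1

lemma Rs_finite (r d : ℕ) : (Rs r d).Finite :=
  (List.finite_length_eq Bool r).subset fun _ h => by
    have := h.1
    simpa using this

lemma Ls_zero (d : ℕ) : Ls 0 d = {[]} := by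
  ext w
  constructor
  · intro h
    have := h.1
    simpa using this
  · rintro rfl
    refine ⟨rfl, by simp, ?_⟩
    intro u1 v1 u2 v2 h1
    simp at h1

lemma Rs_zero (d : ℕ) : Rs 0 d = ∅ := by
  ext w
  simp only [Set.mem_empty_iff_false, iff_false]
  intro h
  have h1 := h.1
  have h2 := h.2.1
  simp at h1
  subst h1
  simp at h2

lemma Rs_d_zero (r : ℕ) : Rs r 0 = ∅ := by
  ext w
  simp only [Set.mem_empty_iff_false, iff_false]
  rintro ⟨h1, h2, h3⟩
  have key : ∀ w : List Bool, ∃ u v, false :: w = u ++ false :: v ∧ v.count false = 0 := by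
    intro w
    induction w using List.reverseRecOn with
    | nil => exact ⟨[], [], rfl, rfl⟩
    | append_singleton w a ih =>
      cases a
      · exact ⟨false :: w, [], by simp, rfl⟩
      · obtain ⟨u, v, h, hv⟩ := ih
        refine ⟨u, v ++ [true], ?_, by simpa using hv⟩
        rw [← List.cons_append, h]
        simp
  obtain ⟨u, v, h, hv⟩ := key w
  have := h3 [] w u v rfl h (by simp [hv])
  simp at this

lemma Ls_succ (r d : ℕ) :
    Ls (r + 1) d = (List.cons true) '' Ls r (d + 1) ∪ (List.cons false) '' Rs r d := by
  ext w
  rcases w with _ | ⟨a, w⟩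
  · simp [Ls]
  · cases a
    · simp [Rs]
    · simp [Ls, cnd_true_cons]

lemma Rs_succ (r d : ℕ) :
    Rs (r + 1) (d + 1) =
      (fun w => w ++ [true]) '' Rs r d ∪ (fun w => w ++ [false]) '' Ls r (d + 1) := by
  ext w
  rcases List.eq_nil_or_concat w with rfl | ⟨w, a, rfl⟩
  · simp [Rs, Ls]
  · cases a
    · have : Even (List.count false w + 1 + 1) ↔ Even (List.count false w) := by
        simp [Nat.even_add_one, -Nat.not_even_iff_odd]
      simp [Rs, Ls, cnd_false_false, this]
    · have := cnd_concat_true d (false :: w)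
      simp at this
      simp [Rs, Ls, this]

lemma Lc_succ (r d : ℕ) : (Ls (r + 1) d).ncard = (Ls r (d + 1)).ncard + (Rs r d).ncard := by
  rw [Ls_succ, Set.ncard_union_eq _ ((Ls_finite _ _).image _) ((Rs_finite _ _).image _),
    Set.ncard_image_of_injective _ (List.cons_injective),
    Set.ncard_image_of_injective _ (List.cons_injective)]
  rw [Set.disjoint_left]
  rintro _ ⟨a, -, rfl⟩ ⟨b, -, h⟩
  simp at h

lemma Rc_succ (r d : ℕ) :
    (Rs (r + 1) (d + 1)).ncard = (Rs r d).ncard + (Ls r (d + 1)).ncard := by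
  rw [Rs_succ, Set.ncard_union_eq _ ((Rs_finite _ _).image _) ((Ls_finite _ _).image _),
    Set.ncard_image_of_injective _ (List.append_left_injective _),
    Set.ncard_image_of_injective _ (List.append_left_injective _)]
  rw [Set.disjoint_left]
  rintro _ ⟨a, -, rfl⟩ ⟨b, -, h⟩
  have := (List.append_inj' h rfl).2
  simp at this

/-! ### Walk counting -/

def UU : ℕ → ℤ → ℤ
  | 0, x => if 0 ≤ x then 1 else 0
  | t + 1, x => UU t (x - 1) + UU t (x + 1)

lemma Lc_eq (t : ℕ) : ∀ d : ℕ, ((Ls (t + 1) d).ncard : ℤ) = UU t (d + 1) - UU t (-d - 1) := by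
  induction t with
  | zero =>
    intro d
    rw [Lc_succ, Ls_zero, Rs_zero]
    have h1 : (0 : ℤ) ≤ d + 1 := by omega
    have h2 : ¬ (0 : ℤ) ≤ -d - 1 := by omega
    simp only [UU, h1, h2, if_true, if_false]
    simp
  | succ t ih =>
    intro d
    rw [Lc_succ]
    rcases d with _ | d
    · rw [Rs_d_zero]
      push_cast
      rw [ih]
      simp only [UU]
      norm_num
      ring
    · rw [Rc_succ, add_comm (Rs t d).ncard, ← Lc_succ]
      push_cast
      rw [ih, ih]
      simp only [UU]
      push_cast
      ring_nf

lemma UU_diff (t : ℕ) : (∀ x : ℤ, x < -t → UU t x - UU t (x - 2) = 0) ∧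
    ∀ j : ℕ, UU t (2 * j - t) - UU t (2 * j - t - 2) = t.choose j := by
  induction t with
  | zero =>
    constructor
    · intro x hx
      have h1 : ¬ 0 ≤ x := by simpa using hx
      have h2 : ¬ 0 ≤ x - 2 := by omega
      simp only [UU, h1, h2, if_false, sub_zero]
    · intro j
      rcases j with _ | j
      · simp [UU]
      · have h1 : (0 : ℤ) ≤ 2 * (j + 1 : ℕ) - (0 : ℕ) := by omega
        have h2 : (0 : ℤ) ≤ 2 * (j + 1 : ℕ) - (0 : ℕ) - 2 := by omega
        simp only [UU, h1, h2, if_true]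
        simp
  | succ t ih =>
    obtain ⟨i1, i2⟩ := ih
    constructor
    · intro x hx
      have a := i1 (x - 1) (by push_cast at hx; omega)
      have b := i1 (x + 1) (by push_cast at hx; omega)
      simp only [UU]
      rw [show x - 2 - 1 = x - 1 - 2 by ring, show x - 2 + 1 = x + 1 - 2 by ring]
      linarith
    · intro j
      simp only [UU]
      have b := i2 j
      rcases j with _ | j
      · have a := i1 (-t - 2) (by omega)
        simp at *
        ring_nf at *
        linarith
      · have a := i2 j
        rw [Nat.choose_succ_succ']
        push_cast at *
        ring_nf at *
        linarith

lemma Lc_final (m : ℕ) : (Ls (2 * m + 1 + 1) 0).ncard = (2 * m + 1).choose (m + 1) := by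
  have h := Lc_eq (2 * m + 1) 0
  have h2 := (UU_diff (2 * m + 1)).2 (m + 1)
  push_cast at h h2
  ring_nf at h h2
  have : ((Ls (2 * m + 1 + 1) 0).ncard : ℤ) = (2 * m + 1).choose (m + 1) := by
    ring_nf
    rw [h, ← h2]
  exact_mod_cast this

/-! ### Functions on `Fin n` -/

open Finset in
def Good {n : ℕ} (f : Fin n → Bool) : Prop :=
  Even (#{y | f y = false}) ∧ ∀ x z, f x = false → f z = false →
    #{y | y < x ∧ f y = false} = #{y | z < y ∧ f y = false} →
    #{y | z < y ∧ f y = true} < #{y | y < x ∧ f y = true}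

open Finset in
lemma count_ofFn {n : ℕ} (f : Fin n → Bool) (b : Bool) :
    (List.ofFn f).count b = #{y | f y = b} := by
  induction n with
  | zero => simp
  | succ n ih =>
    rw [List.ofFn_succ, List.count_cons, ih, Fin.card_filter_univ_succ]
    simp [add_comm]
    split_ifs <;> simp_all [add_comm]

open Finset in
lemma count_take {n : ℕ} (f : Fin n → Bool) (b : Bool) (i : ℕ) :
    ((List.ofFn f).take i).count b = #{y : Fin n | (y : ℕ) < i ∧ f y = b} := by
  induction n generalizing i with
  | zero => simp
  | succ n ih =>
    rcases i with _ | i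
    · simp
    rw [List.ofFn_succ, List.take_succ_cons, List.count_cons, ih, Fin.card_filter_univ_succ]
    simp [add_comm]
    split_ifs <;> simp_all [add_comm]

open Finset in
lemma count_drop {n : ℕ} (f : Fin n → Bool) (b : Bool) (i : ℕ) :
    ((List.ofFn f).drop i).count b = #{y : Fin n | i ≤ (y : ℕ) ∧ f y = b} := by
  induction n generalizing i with
  | zero => simp
  | succ n ih =>
    rcases i with _ | i
    · rw [List.drop_zero, count_ofFn]
      simp
    rw [List.ofFn_succ, List.drop_succ_cons, ih, Fin.card_filter_univ_succ]
    simp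

lemma ofFn_split {n : ℕ} (f : Fin n → Bool) (x : Fin n) (b : Bool) (h : f x = b) :
    List.ofFn f = (List.ofFn f).take x ++ b :: (List.ofFn f).drop (x + 1) := by
  conv_lhs => rw [← List.take_append_drop x (List.ofFn f)]
  rw [List.drop_eq_getElem_cons (by simp)]
  simp [h]

lemma split_ofFn {n : ℕ} (f : Fin n → Bool) (b : Bool) (u v : List Bool)
    (h : List.ofFn f = u ++ b :: v) :
    ∃ x : Fin n, f x = b ∧ u = (List.ofFn f).take x ∧ v = (List.ofFn f).drop (x + 1) := by
  have hl : u.length < n := by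
    have := congrArg List.length h
    simp at this
    omega
  refine ⟨⟨u.length, hl⟩, ?_, ?_, ?_⟩
  · have := congrArg (fun l => l[u.length]?) h
    simpa [hl] using this
  · simp [h]
  · simp [h]

lemma good_iff {n : ℕ} (f : Fin n → Bool) : Good f ↔ List.ofFn f ∈ Ls n 0 := by
  unfold Good Ls Cnd
  simp only [Set.mem_ofPred_eq, List.length_ofFn, true_and, count_ofFn, zero_add]
  refine and_congr_right fun _ => ⟨?_, ?_⟩
  · intro h u1 v1 u2 v2 h1 h2 hc
    obtain ⟨x, hx, rfl, rfl⟩ := split_ofFn f _ _ _ h1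
    obtain ⟨z, hz, rfl, rfl⟩ := split_ofFn f _ _ _ h2
    rw [count_take, count_drop] at *
    exact h x z hx hz hc
  · intro h x z hx hz hc
    have := h _ _ _ _ (ofFn_split f x false hx) (ofFn_split f z false hz)
    rw [count_take, count_drop, count_take, count_drop] at this
    exact this hc

lemma card_good (n : ℕ) : Nat.card {f : Fin n → Bool // Good f} = (Ls n 0).ncard := by
  have : Ls n 0 = List.ofFn '' {f : Fin n → Bool | Good f} := by
    ext w
    constructor
    · intro h
      obtain ⟨hl, -⟩ := id h
      subst hl
      refine ⟨w.get, ?_, List.ofFn_get w⟩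
      rw [Set.mem_ofPred_eq, good_iff, List.ofFn_get]
      exact h
    · rintro ⟨f, hf, rfl⟩
      exact (good_iff f).1 hf
  rw [this, Set.ncard_image_of_injective _ List.ofFn_injective]
  rfl

/-! ### Permutations -/

structure Comp {n : ℕ} (f : Fin n → Bool) (π : Equiv.Perm (Fin n)) : Prop where
  inv : IsInvolution π
  pres : ∀ x, f (π x) = f x
  anti : ∀ x y, x < y → f x = f y → π y < π x

open Finset in
lemma Comp.card_eq {n : ℕ} {f : Fin n → Bool} {π : Equiv.Perm (Fin n)} (h : Comp f π)
    (x : Fin n) (b : Bool) (hb : f x = b) :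
    #{y | y < x ∧ f y = b} = #{y | π x < y ∧ f y = b} := by
  refine Finset.card_bij' (fun y _ => π y) (fun y _ => π y) ?_ ?_ ?_ ?_
  · intro y hy
    simp at hy ⊢
    exact ⟨h.anti _ _ hy.1 (by rw [hy.2, hb]), by rw [h.pres, hy.2]⟩
  · intro y hy
    simp at hy ⊢
    refine ⟨?_, by rw [h.pres, hy.2]⟩
    have := h.anti _ _ hy.1 (by rw [h.pres, hy.2, hb])
    rwa [h.inv] at this
  · intro y _; exact h.inv y
  · intro y _; exact h.inv y

open Finset in
lemma card_gt_inj {n : ℕ} (f : Fin n → Bool) (b : Bool) (z w : Fin n) (hz : f z = b) (hw : f w = b)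
    (h : #{y | z < y ∧ f y = b} = #{y | w < y ∧ f y = b}) : z = w := by
  have key : ∀ z w : Fin n, f w = b → z < w →
      #{y | w < y ∧ f y = b} < #{y | z < y ∧ f y = b} := by
    intro z w hw hzw
    apply Finset.card_lt_card
    rw [Finset.ssubset_iff_of_subset]
    · exact ⟨w, by simp [hzw, hw], by simp⟩
    · intro y hy
      simp at hy ⊢
      exact ⟨hzw.trans hy.1, hy.2⟩
  rcases lt_trichotomy z w with h1 | h1 | h1
  · have := key z w hw h1; omega
  · exact h1
  · have := key w z hz h1; omega

lemma Comp.eq_of {n : ℕ} {f : Fin n → Bool} {π : Equiv.Perm (Fin n)} (h : Comp f π)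
    (x z : Fin n) (b : Bool) (hx : f x = b) (hz : f z = b)
    (hc : (Finset.univ.filter fun y => y < x ∧ f y = b).card
      = (Finset.univ.filter fun y => z < y ∧ f y = b).card) : z = π x :=
  card_gt_inj f b z (π x) hz (by rw [h.pres, hx]) (by rw [← hc, h.card_eq x b hx])

lemma Comp.unique {n : ℕ} {f : Fin n → Bool} {π σ : Equiv.Perm (Fin n)} (h : Comp f π)
    (h' : Comp f σ) : π = σ := by
  ext1 x
  exact h'.eq_of x (π x) (f x) rfl (h.pres x) (h.card_eq x _ rfl)

def Canon {n : ℕ} (f : Fin n → Bool) (π : Equiv.Perm (Fin n)) : Prop :=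
  ∀ x, f x = false → ∃ y, y < x ∧ f y = true ∧ π y < π x

open Finset in
lemma Comp.canon_iff {n : ℕ} {f : Fin n → Bool} {π : Equiv.Perm (Fin n)} (h : Comp f π) :
    Canon f π ↔ ∀ x, f x = false →
      #{y | π x < y ∧ f y = true} < #{y | y < x ∧ f y = true} := by
  refine forall_congr' fun x => imp_congr_right fun hx => ⟨?_, ?_⟩
  · rintro ⟨y, hyx, hy, hp⟩
    have hs : (Finset.univ.filter fun t => π x < t ∧ f t = true).image π ⊂
        Finset.univ.filter fun t => t < x ∧ f t = true := by
      have aux : ∀ t, π x < t → f t = true → π t < y := by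
        intro t ht hft
        have := h.anti (π y) t (hp.trans ht) (by rw [h.pres, hy, hft])
        rwa [h.inv] at this
      rw [Finset.ssubset_iff_of_subset]
      · refine ⟨y, by simp [hyx, hy], ?_⟩
        simp only [mem_image, mem_filter, mem_univ, true_and, not_exists, not_and, and_imp]
        intro t ht hft e
        have := aux t ht hft
        rw [e] at this
        exact lt_irrefl _ this
      · intro s hs
        simp only [mem_image, mem_filter, mem_univ, true_and] at hs ⊢
        obtain ⟨t, ⟨ht, hft⟩, rfl⟩ := hs
        exact ⟨(aux t ht hft).trans hyx, by rw [h.pres, hft]⟩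
    have := Finset.card_lt_card hs
    rwa [Finset.card_image_of_injective _ π.injective] at this
  · intro hlt
    by_contra hne
    push Not at hne
    apply absurd hlt
    rw [not_lt, ← Finset.card_image_of_injective _ π.injective]
    apply Finset.card_le_card
    intro s hs
    simp only [mem_image, mem_filter, mem_univ, true_and] at hs ⊢
    obtain ⟨t, ⟨ht, hft⟩, rfl⟩ := hs
    refine ⟨lt_of_le_of_ne (hne t ht hft) ?_, by rw [h.pres, hft]⟩
    intro e
    exact absurd (π.injective e) ht.ne'

def Phi {n : ℕ} (π : Equiv.Perm (Fin n)) (x : Fin n) : Bool := decide (∀ y, y < x → π x < π y)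

lemma phi_true {n : ℕ} {π : Equiv.Perm (Fin n)} {x : Fin n} :
    Phi π x = true ↔ ∀ y, y < x → π x < π y := by simp [Phi]

lemma phi_false {n : ℕ} {π : Equiv.Perm (Fin n)} {x : Fin n} :
    Phi π x = false ↔ ∃ y, y < x ∧ π y < π x := by
  simp only [Phi, decide_eq_false_iff_not, not_forall, not_lt]
  constructor
  · rintro ⟨y, h, h'⟩
    exact ⟨y, h, lt_of_le_of_ne h' fun e => h.ne (π.injective e)⟩
  · rintro ⟨y, h, h'⟩
    exact ⟨y, h, h'.le⟩

lemma comp_phi {n : ℕ} {π : Equiv.Perm (Fin n)} (hi : IsInvolution π) (ha : Avoids123 π) :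
    Comp (Phi π) π := by
  have aux : ∀ x, Phi π x = false → Phi π (π x) = false := by
    intro x hx
    rw [phi_false] at *
    obtain ⟨y, h, h'⟩ := hx
    exact ⟨π y, h', by rwa [hi, hi]⟩
  refine ⟨hi, ?_, ?_⟩
  · intro x
    cases h : Phi π x
    · exact aux x h
    · by_contra h'
      have := aux (π x) (by simpa using h')
      rw [hi, h] at this
      simp at this
  · intro x y hxy he
    cases h : Phi π x
    · obtain ⟨a, h1, h2⟩ := phi_false.1 h
      by_contra hn
      exact ha ⟨a, x, y, h1, hxy, h2,
        lt_of_le_of_ne (not_lt.1 hn) fun e => hxy.ne (π.injective e)⟩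
    · rw [h] at he
      exact phi_true.1 he.symm x hxy

lemma canon_phi {n : ℕ} {π : Equiv.Perm (Fin n)} (ha : Avoids123 π) : Canon (Phi π) π := by
  intro x hx
  obtain ⟨y, h1, h2⟩ := phi_false.1 hx
  refine ⟨y, h1, ?_, h2⟩
  cases h : Phi π y
  · obtain ⟨a, h3, h4⟩ := phi_false.1 h
    exact absurd ⟨a, y, x, h3, h1, h4, h2⟩ ha
  · rfl

lemma Comp.phi_eq {n : ℕ} {f : Fin n → Bool} {π : Equiv.Perm (Fin n)} (h : Comp f π)
    (hc : Canon f π) : Phi π = f := by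
  ext1 x
  cases hx : f x
  · obtain ⟨y, h1, -, h2⟩ := hc x hx
    exact phi_false.2 ⟨y, h1, h2⟩
  · rw [phi_true]
    intro y hy
    cases hfy : f y
    · obtain ⟨a, h1, h2, h3⟩ := hc y hfy
      exact (h.anti a x (h1.trans hy) (by rw [h2, hx])).trans h3
    · exact h.anti y x hy (by rw [hx, hfy])

lemma Comp.avoids {n : ℕ} {f : Fin n → Bool} {π : Equiv.Perm (Fin n)} (h : Comp f π) :
    Avoids123 π := by
  rintro ⟨a, b, c, hab, hbc, h1, h2⟩
  have n1 : f a ≠ f b := fun e => absurd (h.anti a b hab e) h1.le.not_gt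
  have n2 : f b ≠ f c := fun e => absurd (h.anti b c hbc e) h2.le.not_gt
  have n3 : f a ≠ f c := fun e => absurd (h.anti a c (hab.trans hbc) e) (h1.trans h2).le.not_gt
  cases ea : f a <;> cases eb : f b <;> cases ec : f c <;> simp_all

lemma exists_rev {n : ℕ} (T : Finset (Fin n)) : ∃ ρ : Fin n → Fin n,
    (∀ x ∈ T, ρ x ∈ T) ∧ (∀ x ∈ T, ρ (ρ x) = x) ∧ ∀ x ∈ T, ∀ y ∈ T, x < y → ρ y < ρ x := by
  let e := T.orderIsoOfFin rfl
  refine ⟨fun x => if h : x ∈ T then (e (Fin.rev (e.symm ⟨x, h⟩)) : Fin n) else x, ?_, ?_, ?_⟩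
  · intro x hx
    simp [hx]
  · intro x hx
    simp [hx]
  · intro x hx y hy hxy
    simp [hx, hy, hxy]

lemma exists_comp {n : ℕ} (f : Fin n → Bool) : ∃ π, Comp f π := by
  choose ρ h1 h2 h3 using fun b => exists_rev (Finset.univ.filter fun y => f y = b)
  simp only [Finset.mem_filter, Finset.mem_univ, true_and] at h1 h2 h3
  have hp : ∀ x, f (ρ (f x) x) = f x := fun x => h1 (f x) x rfl
  have hi : Function.Involutive fun x => ρ (f x) x := by
    intro x
    simp only [hp]
    exact h2 _ x rfl
  refine ⟨hi.toPerm, ?_, ?_, ?_⟩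
  · intro x; exact hi x
  · intro x; exact hp x
  · intro x y hxy he
    have := h3 (f x) x rfl y he.symm hxy
    simpa [he] using this

open Finset in
lemma even_of_fpf {n : ℕ} {π : Equiv.Perm (Fin n)} (hi : IsInvolution π) (h0 : ∀ x, π x ≠ x)
    (T : Finset (Fin n)) (hT : ∀ x ∈ T, π x ∈ T) : Even (#T) := by
  have : ∑ x ∈ T, (1 : ZMod 2) = 0 :=
    Finset.sum_involution (fun x _ => π x) (fun _ _ => by decide) (fun x _ _ => h0 x)
      (fun x hx => hT x hx) (fun x _ => hi x)
  rw [Finset.sum_const, nsmul_eq_mul, mul_one, ZMod.natCast_eq_zero_iff] at this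
  exact even_iff_two_dvd.2 this

lemma fixedPts_zero {n : ℕ} {π : Equiv.Perm (Fin n)} : fixedPts π = 0 ↔ ∀ x, π x ≠ x := by
  simp [fixedPts, Finset.filter_eq_empty_iff]

open Finset in
lemma Comp.no_fix {n : ℕ} {f : Fin n → Bool} {π : Equiv.Perm (Fin n)} (h : Comp f π)
    (he : ∀ b, Even (#{y | f y = b})) (x : Fin n) : π x ≠ x := by
  intro hx
  have h1 := h.card_eq x (f x) rfl
  rw [hx] at h1
  have : (Finset.univ.filter fun y => f y = f x) =
      insert x ((Finset.univ.filter fun y => y < x ∧ f y = f x) ∪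
        (Finset.univ.filter fun y => x < y ∧ f y = f x)) := by
    ext y
    simp only [mem_filter, mem_univ, true_and, mem_insert, mem_union]
    rcases lt_trichotomy y x with h | h | h
    · simp [h, h.ne]
    · simp [h]
    · simp [h, h.ne']
  have hev := he (f x)
  rw [this, Finset.card_insert_of_notMem (by simp), Finset.card_union_of_disjoint, ← h1] at hev
  · rw [Nat.even_iff] at hev
    omega
  · rw [Finset.disjoint_left]
    intro y hy hy'
    simp at hy hy'
    exact absurd hy.1 hy'.1.not_gt

lemma good_of_phi {n : ℕ} {π : Equiv.Perm (Fin n)} (hi : IsInvolution π) (ha : Avoids123 π)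
    (h0 : fixedPts π = 0) : Good (Phi π) := by
  have hc := comp_phi hi ha
  refine ⟨even_of_fpf hi (fixedPts_zero.1 h0) _ ?_, ?_⟩
  · intro x hx
    simpa [hc.pres] using hx
  · intro x z hx hz hcd
    have := hc.eq_of x z false hx hz hcd
    subst this
    exact hc.canon_iff.1 (canon_phi ha) x hx

lemma card_perm (n : ℕ) (hn : Even n) :
    iCount123 n 0 = Nat.card {f : Fin n → Bool // Good f} := by
  refine Nat.card_congr (Equiv.ofBijective
    (fun p => ⟨Phi p.1, good_of_phi p.2.1 p.2.2.1 p.2.2.2⟩) ⟨?_, ?_⟩)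
  · rintro ⟨π, h1, h2, h3⟩ ⟨σ, k1, k2, k3⟩ he
    simp only [Subtype.mk.injEq] at he ⊢
    have a := comp_phi h1 h2
    rw [he] at a
    exact a.unique (comp_phi k1 k2)
  · rintro ⟨f, hf⟩
    obtain ⟨π, hc⟩ := exists_comp f
    have hcan : Canon f π := hc.canon_iff.2 fun x hx =>
      hf.2 x (π x) hx (by rw [hc.pres, hx]) (hc.card_eq x _ hx)
    have hev : ∀ b, Even (Finset.univ.filter fun y => f y = b).card := by
      intro b
      cases b
      · exact hf.1
      · have := Finset.card_filter_add_card_filter_not (s := Finset.univ) (fun y => f y = false)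
        simp only [Bool.not_eq_false, Finset.card_univ, Fintype.card_fin] at this
        have h1 := hf.1
        rw [← this] at hn
        exact (Nat.even_add.1 hn).1 h1
    exact ⟨⟨π, hc.inv, hc.avoids, fixedPts_zero.2 (hc.no_fix hev)⟩,
      Subtype.ext (hc.phi_eq hcan)⟩

/-- For every even `n ≥ 1`, the number of 123-avoiding involutions of `{1, …, n}` with no
fixed points equals `C(n-1, n/2)`; for every odd `n ≥ 1` this number is `0`. -/
theorem statement0 (n : ℕ) (hn : 1 ≤ n) :
    (Even n → iCount123 n 0 = (n - 1).choose (n / 2)) ∧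
    (Odd n → iCount123 n 0 = 0) := by
  constructor
  · intro he
    rw [card_perm n he, card_good]
    obtain ⟨k, rfl⟩ := he
    obtain ⟨m, rfl⟩ : ∃ m, k = m + 1 := ⟨k - 1, by omega⟩
    have := Lc_final m
    rw [show m + 1 + (m + 1) = 2 * m + 1 + 1 by ring, this]
    congr 1
    omega
  · intro ho
    unfold iCount123
    have : IsEmpty {π : Equiv.Perm (Fin n) // IsInvolution π ∧ Avoids123 π ∧ fixedPts π = 0} := by
      refine ⟨fun p => ?_⟩
      have := even_of_fpf p.2.1 (fixedPts_zero.1 p.2.2.2) Finset.univ (by simp)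
      rw [Finset.card_univ, Fintype.card_fin] at this
      exact (Nat.not_even_iff_odd.2 ho) this
    exact Nat.card_of_isEmpty
end

section
/- For every odd integer n ≥ 1, the number of 123-avoiding involutions of {1,2,…,n} with exactly one fixed point equals the binomial coefficient C(n, (n-1)/2); for every even n ≥ 1 this number is 0. -/
open Finset

def GoodD (n : ℕ) (D : Finset ℕ) : Prop := ∀ t ≤ n, 2 * Nat.count (· ∈ D) t ≤ t

noncomputable def GSet (n d : ℕ) : Finset (Finset ℕ) :=
  by classical exact (range n).powerset.filter (fun D => GoodD n D ∧ D.card ≤ d)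

lemma mem_GSet {n d : ℕ} {D : Finset ℕ} :
    D ∈ GSet n d ↔ D ⊆ range n ∧ GoodD n D ∧ D.card ≤ d := by
  classical
  simp [GSet]

lemma count_full {n : ℕ} {D : Finset ℕ} (h : D ⊆ range n) : Nat.count (· ∈ D) n = D.card := by
  rw [Nat.count_eq_card_filter_range]
  congr 1
  ext x
  simp only [mem_filter, and_iff_right_iff_imp]
  exact fun hx => h hx

lemma count_congr' {p q : ℕ → Prop} [DecidablePred p] [DecidablePred q] (t : ℕ)
    (h : ∀ i < t, (p i ↔ q i)) : Nat.count p t = Nat.count q t := by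
  rw [Nat.count_eq_card_filter_range, Nat.count_eq_card_filter_range]
  congr 1
  ext x
  simp only [mem_filter, mem_range]
  constructor
  · rintro ⟨a, b⟩; exact ⟨a, (h x a).1 b⟩
  · rintro ⟨a, b⟩; exact ⟨a, (h x a).2 b⟩

lemma GSet_zero (n : ℕ) : (GSet n 0).card = 1 := by
  rw [card_eq_one]
  refine ⟨∅, ?_⟩
  ext D
  rw [mem_GSet, mem_singleton]
  constructor
  · rintro ⟨_, _, h⟩
    exact card_eq_zero.1 (by omega)
  · rintro rfl
    refine ⟨by simp, ?_, by simp⟩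
    intro t _
    have : Nat.count (· ∈ (∅ : Finset ℕ)) t = 0 := by
      rw [Nat.count_eq_card_filter_range]; simp
    omega

lemma GSet_rec (n d : ℕ) (hd : 2 * (d + 1) ≤ n + 1) :
    (GSet (n+1) (d+1)).card = (GSet n (d+1)).card + (GSet n d).card := by
  classical
  have key : GSet (n+1) (d+1) = GSet n (d+1) ∪ (GSet n d).image (insert n) := by
    ext D
    simp only [mem_union, mem_image, mem_GSet]
    constructor
    · rintro ⟨h1, h2, h3⟩
      by_cases hn : n ∈ D
      · right
        refine ⟨D.erase n, ⟨?_, ?_, ?_⟩, insert_erase hn⟩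
        · intro x hx
          have := h1 (mem_of_mem_erase hx)
          have := ne_of_mem_erase hx
          simp at *; omega
        · intro t ht
          rw [count_congr' (q := (· ∈ D)) t]
          · exact h2 t (by omega)
          · intro i hi; simp; omega
        · rw [card_erase_of_mem hn]; omega
      · left
        refine ⟨?_, fun t ht => h2 t (by omega), h3⟩
        intro x hx
        have := h1 hx
        have : x ≠ n := by rintro rfl; exact hn hx
        simp at *; omega
    · rintro (⟨h1, h2, h3⟩ | ⟨E, ⟨h1, h2, h3⟩, rfl⟩)
      · refine ⟨h1.trans (by simp), ?_, h3⟩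
        intro t ht
        rcases Nat.lt_or_ge n t with h | h
        · obtain rfl : t = n + 1 := by omega
          rw [count_full (h1.trans (by simp))]; omega
        · exact h2 t h
      · have hs : insert n E ⊆ range (n+1) := by
          intro x hx
          rcases mem_insert.1 hx with rfl | hx
          · simp
          · have := h1 hx
            simp at *; omega
        have hc : (insert n E).card ≤ d + 1 := (card_insert_le _ _).trans (by omega)
        refine ⟨hs, ?_, hc⟩
        intro t ht
        rcases Nat.lt_or_ge n t with h | h
        · obtain rfl : t = n + 1 := by omega
          rw [count_full hs]; omega
        · rw [count_congr' (q := (· ∈ E)) t]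
          · exact h2 t h
          · intro i hi; simp; omega
  rw [key, card_union_of_disjoint, card_image_of_injOn]
  · intro E hE F hF h
    have e1 : n ∉ E := fun h => by simpa using (mem_GSet.1 hE).1 h
    have e2 : n ∉ F := fun h => by simpa using (mem_GSet.1 hF).1 h
    rw [← erase_insert e1, h, erase_insert e2]
  · rw [disjoint_left]
    intro D hD hD'
    obtain ⟨E, _, rfl⟩ := mem_image.1 hD'
    have := (mem_GSet.1 hD).1 (mem_insert_self n E)
    simp at this

lemma GSet_card (n : ℕ) : ∀ d, 2 * d ≤ n + 1 → (GSet n d).card = n.choose d := by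
  induction n with
  | zero =>
    intro d hd
    obtain rfl : d = 0 := by omega
    simpa using GSet_zero 0
  | succ n ih =>
    have A : ∀ d, 2 * d ≤ n + 1 → (GSet (n+1) d).card = (n+1).choose d := by
      intro d hd
      rcases d with _ | d
      · simpa using GSet_zero (n+1)
      · rw [GSet_rec n d hd, ih _ hd, ih d (by omega), Nat.choose_succ_succ, add_comm]
    intro d hd
    rcases Nat.lt_or_ge (n+1) (2*d) with h | h
    · obtain ⟨e, rfl⟩ : ∃ e, d = e + 1 := ⟨d - 1, by omega⟩
      have : GSet (n+1) (e+1) = GSet (n+1) e := by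
        ext D
        simp only [mem_GSet]
        constructor
        · rintro ⟨h1, h2, h3⟩
          refine ⟨h1, h2, ?_⟩
          have := h2 (n+1) le_rfl
          rw [count_full h1] at this
          omega
        · rintro ⟨h1, h2, h3⟩
          exact ⟨h1, h2, by omega⟩
      rw [this, A e (by omega)]
      apply Nat.choose_symm_of_eq_add
      omega
    · exact A d h

lemma exists_rev_s2 {n : ℕ} (S : Finset (Fin n)) : ∃ ρ : Equiv.Perm (Fin n), IsInvolution ρ ∧
    (∀ i, ρ i ∈ S ↔ i ∈ S) ∧ (∀ i j, (i ∈ S ↔ j ∈ S) → i < j → ρ j < ρ i) := by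
  classical
  have R : ∀ T : Finset (Fin n), ∃ f : Fin n → Fin n, (∀ i ∈ T, f i ∈ T) ∧ (∀ i ∈ T, f (f i) = i) ∧
      (∀ i ∈ T, ∀ j ∈ T, i < j → f j < f i) := by
    intro T
    let e := T.orderIsoOfFin rfl
    let f : Fin n → Fin n := fun i => if h : i ∈ T then (e (Fin.rev (e.symm ⟨i, h⟩))).1 else i
    have hf : ∀ i (h : i ∈ T), f i = (e (Fin.rev (e.symm ⟨i, h⟩))).1 := fun i h => by simp [f, h]
    refine ⟨f, ?_, ?_, ?_⟩
    · intro i h; rw [hf i h]; exact (e _).2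
    · intro i h
      have h' : f i ∈ T := by rw [hf i h]; exact (e _).2
      rw [hf _ h']
      have : (⟨f i, h'⟩ : T) = e (Fin.rev (e.symm ⟨i, h⟩)) := Subtype.ext (hf i h)
      rw [this]; simp
    · intro i hi j hj hij
      rw [hf i hi, hf j hj]
      simpa using hij
  obtain ⟨f, f1, f2, f3⟩ := R S
  obtain ⟨g, g1, g2, g3⟩ := R Sᶜ
  simp only [mem_compl] at g1 g2 g3
  let F : Fin n → Fin n := fun i => if i ∈ S then f i else g i
  have F1 : ∀ i ∈ S, F i = f i := fun i h => by simp [F, h]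
  have F2 : ∀ i, i ∉ S → F i = g i := fun i h => by simp [F, h]
  have inv : ∀ i, F (F i) = i := by
    intro i
    by_cases h : i ∈ S
    · rw [F1 i h, F1 _ (f1 i h), f2 i h]
    · rw [F2 i h, F2 _ (g1 i h), g2 i h]
  refine ⟨⟨F, F, inv, inv⟩, inv, ?_, ?_⟩
  · intro i
    change F i ∈ S ↔ _
    by_cases h : i ∈ S
    · rw [F1 i h]; simp [h, f1 i h]
    · rw [F2 i h]; simp [h, g1 i h]
  · intro i j hij hlt
    change F j < F i
    by_cases h : i ∈ S
    · rw [F1 i h, F1 j (hij.1 h)]; exact f3 i h j (hij.1 h) hlt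
    · have h' : j ∉ S := fun k => h (hij.2 k)
      rw [F2 i h, F2 j h']; exact g3 i h j h' hlt

lemma rev_unique {n : ℕ} (π σ : Equiv.Perm (Fin n)) (p : Fin n → Prop) (hσ : IsInvolution σ)
    (h1 : ∀ i, p i → p (π i)) (h2 : ∀ i, p i → p (σ i))
    (h3 : ∀ i j, p i → p j → i < j → π j < π i) (h4 : ∀ i j, p i → p j → i < j → σ j < σ i)
    (i : Fin n) (hi : p i) : π i = σ i := by
  let h : {i // p i} → {i // p i} := fun x => ⟨σ (π x), h2 _ (h1 _ x.2)⟩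
  have hm : StrictMono h := by
    intro x y hxy
    exact h4 _ _ (h1 _ y.2) (h1 _ x.2) (h3 _ _ x.2 y.2 hxy)
  have a := hm.le_apply (x := ⟨i, hi⟩)
  have b := hm.apply_le (x := ⟨i, hi⟩)
  have c : σ (π i) = i := le_antisymm b a
  rw [← hσ (π i), c]

def Dof (n : ℕ) (B : Finset ℕ) : Finset ℕ :=
  (range n).filter (fun t => if t % 2 = 0 then t / 2 ∈ B else n - 1 - t / 2 ∉ B)

def Bof (n : ℕ) (D : Finset ℕ) : Finset ℕ :=
  (range n).filter (fun i => if 2 * i < n then 2 * i ∈ D else 2 * (n - 1 - i) + 1 ∉ D)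

lemma Bof_Dof (n : ℕ) (B : Finset ℕ) (hB : B ⊆ range n) : Bof n (Dof n B) = B := by
  ext i
  have hi := @hB i
  rw [mem_range] at hi
  simp only [Bof, Dof, mem_filter, mem_range]
  by_cases h : i < n
  · by_cases h2 : 2 * i < n
    · have e1 : 2 * i % 2 = 0 := by omega
      have e2 : 2 * i / 2 = i := by omega
      simp [h, h2, e2]
    · have e1 : (2 * (n - 1 - i) + 1) % 2 = 1 := by omega
      have e2 : (2 * (n - 1 - i) + 1) / 2 = n - 1 - i := by omega
      have e3 : n - 1 - (n - 1 - i) = i := by omega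
      have e4 : 2 * (n - 1 - i) + 1 < n := by omega
      simp [h, h2, e2, e3, e4]
  · simp [h]; tauto

lemma Dof_Bof (n : ℕ) (D : Finset ℕ) (hD : D ⊆ range n) : Dof n (Bof n D) = D := by
  ext t
  have ht := @hD t
  rw [mem_range] at ht
  simp only [Bof, Dof, mem_filter, mem_range]
  by_cases h : t < n
  · by_cases h2 : t % 2 = 0
    · have e1 : t / 2 < n := by omega
      have e2 : 2 * (t / 2) = t := by omega
      simp [h, h2, e1, e2]
    · have e1 : n - 1 - t / 2 < n := by omega
      have e2 : ¬ 2 * (n - 1 - t / 2) < n := by omega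
      have e3 : 2 * (n - 1 - (n - 1 - t / 2)) + 1 = t := by omega
      simp [h, h2, e1, e2, e3]
  · simp [h]; tauto

lemma count_Dof (n : ℕ) (B : Finset ℕ) (s : ℕ) (hs : 2 * s ≤ n) :
    Nat.count (· ∈ Dof n B) (2 * s) + Nat.count (fun i => n - 1 - i ∈ B) s
      = Nat.count (· ∈ B) s + s := by
  induction s with
  | zero => simp
  | succ s ih =>
    have ih := ih (by omega)
    rw [show 2 * (s + 1) = 2 * s + 1 + 1 by ring]
    simp only [Nat.count_succ]
    have h1 : 2 * s ∈ Dof n B ↔ s ∈ B := by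
      have e2 : 2 * s / 2 = s := by omega
      have e3 : 2 * s < n := by omega
      simp [Dof, e2, e3]
    have h2 : 2 * s + 1 ∈ Dof n B ↔ n - 1 - s ∉ B := by
      have e2 : (2 * s + 1) / 2 = s := by omega
      have e3 : 2 * s + 1 < n := by omega
      simp [Dof, e2, e3]
    simp only [h1, h2]
    by_cases k1 : s ∈ B <;> by_cases k2 : n - 1 - s ∈ B <;> simp [k1, k2] <;> omega

lemma count_Dof' (n : ℕ) (B : Finset ℕ) (s : ℕ) (hs : 2 * s + 1 ≤ n) :
    Nat.count (· ∈ Dof n B) (2 * s + 1) + Nat.count (fun i => n - 1 - i ∈ B) s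
      = Nat.count (· ∈ B) (s + 1) + s := by
  have := count_Dof n B s (by omega)
  simp only [Nat.count_succ]
  have h1 : 2 * s ∈ Dof n B ↔ s ∈ B := by
    have e2 : 2 * s / 2 = s := by omega
    have e3 : 2 * s < n := by omega
    simp [Dof, e2, e3]
  simp only [h1]
  omega

lemma good_iff_s2 (n : ℕ) (hn : Odd n) (B : Finset ℕ) : GoodD n (Dof n B) ↔
    ∀ s, 2 * s + 1 ≤ n → Nat.count (· ∈ B) (s + 1) ≤ Nat.count (fun i => n - 1 - i ∈ B) s := by
  constructor
  · intro h s hs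
    have := h _ hs
    have := count_Dof' n B s hs
    omega
  · intro h t ht
    rcases Nat.even_or_odd' t with ⟨s, rfl | rfl⟩
    · have a := count_Dof n B s ht
      have b := h s (by obtain ⟨m, rfl⟩ := hn; omega)
      have c : Nat.count (· ∈ B) s ≤ Nat.count (· ∈ B) (s+1) := Nat.count_monotone _ (by omega)
      omega
    · have a := count_Dof' n B s ht
      have b := h s ht
      omega

def Big {n : ℕ} (π : Equiv.Perm (Fin n)) (i : Fin n) : Prop := n ≤ (i : ℕ) + (π i : ℕ)

instance {n : ℕ} (π : Equiv.Perm (Fin n)) : DecidablePred (Big π) := fun i => by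
  unfold Big; infer_instance

lemma big_symm {n : ℕ} {π : Equiv.Perm (Fin n)} (h : IsInvolution π) (i : Fin n) :
    Big π (π i) ↔ Big π i := by
  unfold Big; rw [h i, add_comm]

lemma card_lt {n : ℕ} (π : Equiv.Perm (Fin n)) (i : Fin n) :
    (univ.filter (fun k => π k < π i)).card = π i := by
  rw [← Fin.card_Iio (π i), ← card_map π.toEmbedding]
  congr 1
  ext k
  simp only [mem_filter, mem_univ, true_and, mem_map_equiv, mem_Iio, Equiv.apply_symm_apply]

lemma card_gt {n : ℕ} (π : Equiv.Perm (Fin n)) (i : Fin n) :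
    (univ.filter (fun k => π i < π k)).card = n - 1 - π i := by
  rw [← Fin.card_Ioi (π i), ← card_map π.toEmbedding]
  congr 1
  ext k
  simp only [mem_filter, mem_univ, true_and, mem_map_equiv, mem_Ioi, Equiv.apply_symm_apply]

lemma avoid_anti {n : ℕ} {π : Equiv.Perm (Fin n)} (h : Avoids123 π) (i j : Fin n)
    (hb : Big π i ↔ Big π j) (hij : i < j) : π j < π i := by
  by_contra hc
  have hlt : π i < π j := lt_of_le_of_ne (not_lt.1 hc) (fun e => hij.ne (π.injective e))
  have h1 : ¬ Big π i := by
    have hd : Disjoint (Iio i) (univ.filter (fun k => π k < π i)) := by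
      rw [disjoint_left]
      intro k hk hk'
      simp at hk hk'
      exact h ⟨k, i, j, hk, hij, hk', hlt⟩
    have hs : Iio i ∪ univ.filter (fun k => π k < π i) ⊆ univ.erase i := by
      intro k hk
      simp at hk ⊢
      rintro rfl
      simp at hk
    have := card_le_card hs
    rw [card_union_of_disjoint hd, card_lt, Fin.card_Iio, card_erase_of_mem (mem_univ _),
      card_univ, Fintype.card_fin] at this
    unfold Big
    have := i.2
    omega
  have h2 : Big π j := by
    have hd : Disjoint (Ioi j) (univ.filter (fun k => π j < π k)) := by
      rw [disjoint_left]
      intro k hk hk'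
      simp at hk hk'
      exact h ⟨i, j, k, hij, hk, hlt, hk'⟩
    have hs : Ioi j ∪ univ.filter (fun k => π j < π k) ⊆ (univ.erase j).erase i := by
      intro k hk
      simp at hk ⊢
      refine ⟨?_, ?_⟩
      · rintro rfl
        rcases hk with hk | hk
        · exact lt_asymm hk hij
        · exact lt_asymm hk hlt
      · rintro rfl
        simp at hk
    have := card_le_card hs
    rw [card_union_of_disjoint hd, card_gt, Fin.card_Ioi,
      card_erase_of_mem (mem_erase.2 ⟨hij.ne, mem_univ _⟩), card_erase_of_mem (mem_univ _),
      card_univ, Fintype.card_fin] at this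
    unfold Big
    have := (π j).2
    have := j.2
    have : (i:ℕ) < j := hij
    omega
  exact h1 (hb.2 h2)

def Bset {n : ℕ} (π : Equiv.Perm (Fin n)) : Finset ℕ :=
  (univ.filter (Big π)).map Fin.valEmbedding

lemma mem_Bset {n : ℕ} {π : Equiv.Perm (Fin n)} {i : ℕ} :
    i ∈ Bset π ↔ ∃ h : i < n, Big π ⟨i, h⟩ := by
  simp only [Bset, mem_map, mem_filter, mem_univ, true_and, Fin.valEmbedding_apply]
  constructor
  · rintro ⟨a, ha, rfl⟩; exact ⟨a.2, ha⟩
  · rintro ⟨h, hb⟩; exact ⟨_, hb, rfl⟩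

lemma mem_Bset' {n : ℕ} {π : Equiv.Perm (Fin n)} {i : Fin n} :
    (i : ℕ) ∈ Bset π ↔ Big π i := by
  rw [mem_Bset]; simp

lemma Bset_sub {n : ℕ} (π : Equiv.Perm (Fin n)) : Bset π ⊆ range n := by
  intro i hi; rw [mem_Bset] at hi; exact mem_range.2 hi.1

lemma Bset_good {n : ℕ} {π : Equiv.Perm (Fin n)} (h : IsInvolution π) (s : ℕ)
    (hs : 2 * s + 1 ≤ n) : Nat.count (· ∈ Bset π) (s + 1) ≤
      Nat.count (fun i => n - 1 - i ∈ Bset π) s := by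
  classical
  rw [Nat.count_eq_card_filter_range, Nat.count_eq_card_filter_range]
  let f : ℕ → ℕ := fun i => if h : i < n then n - 1 - π ⟨i, h⟩ else 0
  have hf : ∀ i (h : i < n), f i = n - 1 - π ⟨i, h⟩ := fun i h => by simp [f, h]
  apply card_le_card_of_injOn f
  · intro i hi
    simp only [coe_filter, mem_range, Set.mem_ofPred_eq] at hi ⊢
    obtain ⟨hi, hB⟩ := hi
    obtain ⟨hn, hb⟩ := mem_Bset.1 hB
    rw [hf i hn]
    have hp := (π ⟨i, hn⟩).2
    have hb2 := (big_symm h ⟨i, hn⟩).2 hb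
    unfold Big at hb
    simp only at hb
    refine ⟨by omega, ?_⟩
    rw [show n - 1 - (n - 1 - (π ⟨i, hn⟩ : ℕ)) = (π ⟨i, hn⟩ : ℕ) by omega]
    exact mem_Bset'.2 hb2
  · intro i hi j hj hij
    simp only [coe_filter, mem_range, Set.mem_ofPred_eq] at hi hj
    have h1 : i < n := by omega
    have h2 : j < n := by omega
    rw [hf i h1, hf j h2] at hij
    have := (π ⟨i, h1⟩).2
    have := (π ⟨j, h2⟩).2
    have := π.injective (Fin.ext (show (π ⟨i, h1⟩ : ℕ) = π ⟨j, h2⟩ by omega))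
    simpa using this

lemma Bset_inj {n : ℕ} {π σ : Equiv.Perm (Fin n)} (h : IsInvolution π) (h' : IsInvolution σ)
    (ha : Avoids123 π) (ha' : Avoids123 σ) (e : Bset π = Bset σ) : π = σ := by
  have hB : ∀ i, Big π i ↔ Big σ i := fun i => by rw [← mem_Bset', ← mem_Bset', e]
  ext i
  congr 1
  by_cases hi : Big π i
  · refine rev_unique π σ (Big π) h' (fun i => (big_symm h i).2) ?_ ?_ ?_ i hi
    · intro i hi; rw [hB] at hi ⊢; exact (big_symm h' i).2 hi
    · intro i j hi hj; exact avoid_anti ha i j (by tauto)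
    · intro i j hi hj; rw [hB] at hi hj; exact avoid_anti ha' i j (by tauto)
  · refine rev_unique π σ (fun i => ¬ Big π i) h' (fun i => mt (big_symm h i).1) ?_ ?_ ?_ i hi
    · intro i hi; rw [hB] at hi ⊢; exact mt (big_symm h' i).1 hi
    · intro i j hi hj; exact avoid_anti ha i j (by tauto)
    · intro i j hi hj; rw [hB] at hi hj; exact avoid_anti ha' i j (by tauto)

lemma Bset_surj {n : ℕ} (B : Finset ℕ) (hB : B ⊆ range n)
    (hc : ∀ s, 2 * s + 1 ≤ n →
      Nat.count (· ∈ B) (s + 1) ≤ Nat.count (fun i => n - 1 - i ∈ B) s) :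
    ∃ π : Equiv.Perm (Fin n), IsInvolution π ∧ Avoids123 π ∧ Bset π = B := by
  classical
  obtain ⟨ρ, hi, hS, ha⟩ := exists_rev_s2 (univ.filter (fun i : Fin n => (i : ℕ) ∈ B))
  simp only [mem_filter, mem_univ, true_and] at hS ha
  -- counts as cards of subsets of Fin n
  have cl : ∀ s ≤ n, Nat.count (· ∈ B) s
      = (univ.filter (fun i : Fin n => (i : ℕ) < s ∧ (i : ℕ) ∈ B)).card := by
    intro s hs
    rw [Nat.count_eq_card_filter_range, ← card_map Fin.valEmbedding]
    congr 1
    ext x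
    simp only [mem_filter, mem_range, mem_map, mem_univ, true_and, Fin.valEmbedding_apply]
    constructor
    · rintro ⟨h1, h2⟩; exact ⟨⟨x, by omega⟩, ⟨h1, h2⟩, rfl⟩
    · rintro ⟨a, h, rfl⟩; exact h
  have cr : ∀ s ≤ n, Nat.count (fun i => n - 1 - i ∈ B) s
      = (univ.filter (fun i : Fin n => n - s ≤ (i : ℕ) ∧ (i : ℕ) ∈ B)).card := by
    intro s hs
    rw [Nat.count_eq_card_filter_range, ← card_map Fin.revPerm.toEmbedding,
      ← card_map Fin.valEmbedding]
    congr 1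
    ext x
    simp only [mem_filter, mem_range, mem_map, mem_univ, true_and, Fin.valEmbedding_apply,
      Equiv.coe_toEmbedding, Fin.revPerm_apply]
    constructor
    · rintro ⟨h1, h2⟩
      refine ⟨⟨x, by omega⟩, ⟨⟨n - 1 - x, by omega⟩, ⟨?_, h2⟩, ?_⟩, rfl⟩
      · change n - s ≤ n - 1 - x
        omega
      · apply Fin.ext
        rw [Fin.val_rev]
        change n - (n - 1 - x + 1) = x
        omega
    · rintro ⟨a, ⟨b, h, rfl⟩, rfl⟩
      rw [Fin.val_rev]
      have := b.2
      rw [show n - 1 - (n - ((b:ℕ) + 1)) = b by omega]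
      exact ⟨by omega, h.2⟩
  have hin : ∀ i : Fin n, (i : ℕ) ∈ B → i ≤ ρ i → Big ρ i := by
    intro i hiB hle
    by_contra hb
    unfold Big at hb
    have hle' : (i : ℕ) ≤ ρ i := hle
    have h1 := hc i (by omega)
    rw [cl _ (by omega), cr _ (by omega)] at h1
    have h2 : (univ.filter (fun j : Fin n => n - i ≤ (j : ℕ) ∧ (j : ℕ) ∈ B)).card
        ≤ (univ.filter (fun j : Fin n => (j : ℕ) < i ∧ (j : ℕ) ∈ B)).card := by
      apply card_le_card_of_injOn ρ
      · intro j hj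
        simp only [coe_filter, mem_univ, true_and, Set.mem_ofPred_eq] at hj ⊢
        refine ⟨?_, (hS j).2 hj.2⟩
        have := ha (ρ i) j (by rw [hS]; tauto) (by rw [Fin.lt_def]; omega)
        rw [hi] at this
        exact this
      · exact ρ.injective.injOn
    have h3 : (univ.filter (fun j : Fin n => (j : ℕ) < i ∧ (j : ℕ) ∈ B)).card
        < (univ.filter (fun j : Fin n => (j : ℕ) < i + 1 ∧ (j : ℕ) ∈ B)).card := by
      apply card_lt_card
      rw [ssubset_iff_of_subset]
      · exact ⟨i, by simp [hiB], by simp⟩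
      · intro j hj
        simp at hj ⊢
        exact ⟨by omega, hj.2⟩
    omega
  have hout : ∀ i : Fin n, (i : ℕ) ∉ B → ρ i ≤ i → ¬ Big ρ i := by
    intro i hiB hle hb
    unfold Big at hb
    have hle' : (ρ i : ℕ) ≤ i := hle
    obtain ⟨s, hs⟩ : ∃ s, s = n - 1 - (i : ℕ) := ⟨_, rfl⟩
    have hin' := i.2
    have h1 := hc s (by omega)
    have h1' : Nat.count (fun i => n - 1 - i ∈ B) s ≤ Nat.count (fun i => n - 1 - i ∈ B) (s+1) :=
      Nat.count_monotone _ (by omega)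
    rw [cl _ (by omega)] at h1
    rw [cr (s+1) (by omega)] at h1'
    have e1 : (univ.filter (fun j : Fin n => (j : ℕ) < s + 1)).card = s + 1 := by
      have := Fin.card_Iio (⟨s+1, by omega⟩ : Fin n)
      refine Eq.trans ?_ this
      congr 1
      ext j
      rw [mem_filter, mem_Iio, Fin.lt_def]
      simp
    have e2 : (univ.filter (fun j : Fin n => n - (s + 1) ≤ (j : ℕ))).card = s + 1 := by
      have := Fin.card_Ici i
      rw [show s + 1 = n - i by omega, ← this]
      congr 1
      ext j
      rw [mem_filter, mem_Ici, Fin.le_def]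
      simp only [mem_univ, true_and]
      omega
    have f1 := card_filter_add_card_filter_not (s := univ.filter (fun j : Fin n => (j : ℕ) < s + 1))
      (fun j => (j : ℕ) ∈ B)
    have f2 := card_filter_add_card_filter_not
      (s := univ.filter (fun j : Fin n => n - (s + 1) ≤ (j : ℕ))) (fun j => (j : ℕ) ∈ B)
    rw [filter_filter, filter_filter] at f1 f2
    have h2 : (univ.filter (fun j : Fin n => (j : ℕ) < s + 1 ∧ (j : ℕ) ∉ B)).card
        ≤ (univ.filter (fun j : Fin n => i < j ∧ (j : ℕ) ∉ B)).card := by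
      apply card_le_card_of_injOn ρ
      · intro j hj
        simp only [coe_filter, mem_univ, true_and, Set.mem_ofPred_eq] at hj ⊢
        refine ⟨?_, mt (hS j).1 hj.2⟩
        have := ha j (ρ i) (by rw [hS]; tauto) (by rw [Fin.lt_def]; omega)
        rw [hi] at this
        exact this
      · exact ρ.injective.injOn
    have h3 : (univ.filter (fun j : Fin n => i < j ∧ (j : ℕ) ∉ B)).card
        < (univ.filter (fun j : Fin n => n - (s + 1) ≤ (j : ℕ) ∧ (j : ℕ) ∉ B)).card := by
      apply card_lt_card
      rw [ssubset_iff_of_subset]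
      · refine ⟨i, ?_, by simp⟩
        simp [hiB]; omega
      · intro j hj
        simp only [mem_filter, mem_univ, true_and] at hj ⊢
        have : (i : ℕ) < j := hj.1
        exact ⟨by omega, hj.2⟩
    omega
  have hBig : ∀ i : Fin n, Big ρ i ↔ (i : ℕ) ∈ B := by
    intro i
    rcases le_total i (ρ i) with h | h
    · refine ⟨fun hb => ?_, fun hb => hin i hb h⟩
      by_contra hn
      refine hout (ρ i) (mt (hS i).1 hn) ?_ ((big_symm hi i).2 hb)
      rw [hi]; exact h
    · refine ⟨fun hb => ?_, fun hb => ?_⟩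
      · by_contra hn
        exact hout i hn h hb
      · refine (big_symm hi i).1 (hin (ρ i) ((hS i).2 hb) ?_)
        rw [hi]; exact h
  refine ⟨ρ, hi, ?_, ?_⟩
  · rintro ⟨a, b, c, hab, hbc, h1, h2⟩
    by_cases k1 : (a : ℕ) ∈ B ↔ (b : ℕ) ∈ B
    · exact lt_asymm h1 (ha a b k1 hab)
    · by_cases k2 : (b : ℕ) ∈ B ↔ (c : ℕ) ∈ B
      · exact lt_asymm h2 (ha b c k2 hbc)
      · exact lt_asymm (h1.trans h2) (ha a c (by tauto) (hab.trans hbc))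
  · ext i
    rw [mem_Bset]
    constructor
    · rintro ⟨h, hb⟩; exact (hBig _).1 hb
    · intro h; exact ⟨mem_range.1 (hB h), (hBig _).2 h⟩

lemma fixed_parity {n : ℕ} {π : Equiv.Perm (Fin n)} (h : IsInvolution π) :
    n ≡ fixedPts π [MOD 2] := by
  classical
  have h0 : (show Function.End (Fin n) from ⇑π) ^ 2 ^ 1 = 1 := by
    rw [pow_one, pow_two]
    funext i
    exact h i
  have := Equiv.Perm.card_fixedPoints_modEq (p := 2) (n := 1) h0
  rw [Fintype.card_fin] at this
  refine this.trans ?_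
  unfold fixedPts
  rw [Fintype.card_subtype]
  rfl

lemma fixed_le {n : ℕ} {π : Equiv.Perm (Fin n)} (h : Avoids123 π) : fixedPts π ≤ 2 := by
  by_contra hc
  unfold fixedPts at hc
  obtain ⟨t, ht, hcard⟩ := exists_subset_card_eq (show 3 ≤ _ by exact not_le.1 hc)
  let e := t.orderEmbOfFin hcard
  have he : ∀ i, π (e i) = e i := fun i => (mem_filter.1 (ht (t.orderEmbOfFin_mem hcard i))).2
  have h1 : e 0 < e 1 := e.strictMono (by decide)
  have h2 : e 1 < e 2 := e.strictMono (by decide)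
  exact h ⟨e 0, e 1, e 2, h1, h2, by rwa [he, he], by rwa [he, he]⟩

lemma card_odd (n : ℕ) (hn : Odd n) : iCount123 n 1 = n.choose ((n - 1) / 2) := by
  classical
  rw [← GSet_card n ((n-1)/2) (by omega)]
  unfold iCount123
  rw [Nat.card_eq_fintype_card, Fintype.card_subtype]
  refine card_bij (fun π _ => Dof n (Bset π)) ?_ ?_ ?_
  · intro π hπ
    obtain ⟨h1, h2, h3⟩ := (mem_filter.1 hπ).2
    have hs : Dof n (Bset π) ⊆ range n := filter_subset _ _
    have hg := (good_iff_s2 n hn (Bset π)).2 (Bset_good h1)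
    refine mem_GSet.2 ⟨hs, hg, ?_⟩
    have := hg n le_rfl
    rw [count_full hs] at this
    obtain ⟨m, rfl⟩ := hn
    omega
  · intro π hπ σ hσ h
    obtain ⟨h1, h2, h3⟩ := (mem_filter.1 hπ).2
    obtain ⟨k1, k2, k3⟩ := (mem_filter.1 hσ).2
    apply Bset_inj h1 k1 h2 k2
    rw [← Bof_Dof n _ (Bset_sub π), ← Bof_Dof n _ (Bset_sub σ), h]
  · intro D hD
    obtain ⟨h1, h2, h3⟩ := mem_GSet.1 hD
    rw [← Dof_Bof n D h1, good_iff_s2 n hn] at h2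
    obtain ⟨π, p1, p2, p3⟩ := Bset_surj (Bof n D) (filter_subset _ _) h2
    refine ⟨π, mem_filter.2 ⟨mem_univ _, p1, p2, ?_⟩, ?_⟩
    · have a := fixed_parity p1
      have b := fixed_le p2
      unfold Nat.ModEq at a
      obtain ⟨m, rfl⟩ := hn
      omega
    · rw [p3, Dof_Bof n D h1]

lemma card_even (n : ℕ) (hn : Even n) : iCount123 n 1 = 0 := by
  unfold iCount123
  rw [Nat.card_eq_zero]
  left
  refine ⟨?_⟩
  rintro ⟨π, h1, _, h3⟩
  have a := fixed_parity h1
  unfold Nat.ModEq at a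
  obtain ⟨m, rfl⟩ := hn
  omega

/-- For every odd `n ≥ 1`, the number of 123-avoiding involutions of `{1, …, n}` with
exactly one fixed point equals `C(n, (n-1)/2)`; for every even `n ≥ 1` it is `0`. -/
theorem statement2 (n : ℕ) (hn : 1 ≤ n) :
    (Odd n → iCount123 n 1 = n.choose ((n - 1) / 2)) ∧
    (Even n → iCount123 n 1 = 0) := by
  exact ⟨card_odd n, card_even n⟩
end

section
/- For all integers n ≥ 1 and 0 ≤ k ≤ n with n + k even, the number of 321-avoiding involutions of {1,2,…,n} with exactly k fixed points equals ((k+1)/(n+1))·C(n+1, (n-k)/2), i.e. (n+1)·i_n^k(321) = (k+1)·C(n+1, (n-k)/2); when n + k is odd this number is 0. -/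
/-- A permutation of `Fin n` avoids the pattern 321. -/
def Avoids321 {n : ℕ} (π : Equiv.Perm (Fin n)) : Prop :=
  ¬ ∃ i₁ i₂ i₃ : Fin n, i₁ < i₂ ∧ i₂ < i₃ ∧ (π i₃ < π i₂ ∧ π i₂ < π i₁)

/-- `i_n^k(321)`: the number of 321-avoiding involutions of `{1, …, n}` with exactly
`k` fixed points. -/
noncomputable def iCount321 (n k : ℕ) : ℕ :=
  Nat.card {π : Equiv.Perm (Fin n) // IsInvolution π ∧ Avoids321 π ∧ fixedPts π = k}


/-- Partially matched states. -/
def St {n : ℕ} (t : ℕ) (x : Equiv.Perm (Fin n) × Finset (Fin n)) : Prop :=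
  (∀ i, x.1 (x.1 i) = i) ∧ (∀ i : Fin n, t ≤ i.val → x.1 i = i) ∧
  (∀ p ∈ x.2, p.val < t ∧ x.1 p = p) ∧
  (∀ i j : Fin n, i < j → j.val < t → j ∉ x.2 → j ≤ x.1 j → i ∉ x.2 ∧ x.1 i < x.1 j)

open Classical in
/-- The finite set of states. -/
noncomputable def SS (n t h m : ℕ) : Finset (Equiv.Perm (Fin n) × Finset (Fin n)) :=
  Finset.univ.filter fun x => St t x ∧ x.2.card = h ∧ fixedPts x.1 + t = m + n

/-- Ballot numbers. -/
def Bal : ℕ → ℕ → ℕ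
  | 0, 0 => 1
  | 0, _ + 1 => 0
  | t + 1, 0 => Bal t 1
  | t + 1, m + 1 => Bal t m + Bal t (m + 2)

lemma mem_SS {n t h m : ℕ} (x : Equiv.Perm (Fin n) × Finset (Fin n)) :
    x ∈ SS n t h m ↔ St t x ∧ x.2.card = h ∧ fixedPts x.1 + t = m + n := by
  simp [SS]

lemma fixedPts_swap {n : ℕ} (σ : Equiv.Perm (Fin n)) (q T : Fin n) (hq : σ q = q) (hT : σ T = T)
    (hne : q ≠ T) : fixedPts σ = fixedPts (σ * Equiv.swap q T) + 2 := by
  unfold fixedPts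
  have : (Finset.univ.filter fun i => σ i = i) =
      insert q (insert T (Finset.univ.filter fun i => (σ * Equiv.swap q T) i = i)) := by
    ext i
    rw [Finset.mem_insert, Finset.mem_insert, Finset.mem_filter, Finset.mem_filter,
      Equiv.Perm.mul_apply, Equiv.swap_apply_def]
    split_ifs with h1 h2 <;> grind
  rw [this, Finset.card_insert_of_notMem, Finset.card_insert_of_notMem]
  · rw [Finset.mem_filter, Equiv.Perm.mul_apply, Equiv.swap_apply_right, hq]
    exact fun h => hne h.2
  · rw [Finset.mem_insert, Finset.mem_filter, Equiv.Perm.mul_apply, Equiv.swap_apply_left, hT]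
    rintro (h | h)
    · exact hne h
    · exact hne h.2.symm

lemma fixedPts_ge {n t h : ℕ} (P : Finset (Fin n)) (σ : Equiv.Perm (Fin n))
    (hs : St t (σ, P)) (hh : P.card = h) : n + h ≤ fixedPts σ + t := by
  have h1 : (Finset.univ.filter fun i : Fin n => ¬ (i.val < t)) ∪ P ⊆
      (Finset.univ.filter fun i => σ i = i) := by
    intro i hi
    simp only [Finset.mem_union, Finset.mem_filter, Finset.mem_univ, true_and, not_lt] at hi ⊢
    rcases hi with hi | hi
    · exact hs.2.1 i hi
    · exact (hs.2.2.1 i hi).2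
  have h2 := Finset.card_le_card h1
  rw [Finset.card_union_of_disjoint] at h2
  · have h3 := Finset.card_filter_add_card_filter_not (s := (Finset.univ : Finset (Fin n)))
      (fun i : Fin n => i.val < t)
    have h4 : (Finset.univ.filter fun i : Fin n => i.val < t).card ≤ t := by
      have := Finset.card_le_card_of_injOn (s := Finset.univ.filter fun i : Fin n => i.val < t)
        (t := Finset.range t) (fun i => i.val) (by intro i; simp) 
        (by intro a _ b _ hab; exact Fin.ext hab)
      simpa using this
    simp only [Finset.card_univ, Fintype.card_fin] at h3
    unfold fixedPts
    omega
  · rw [Finset.disjoint_left]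
    intro i hi hp
    simp only [Finset.mem_filter, Finset.mem_univ, true_and, not_lt] at hi
    have := (hs.2.2.1 i hp).1
    omega

open Classical in
lemma card_closer {n t h m : ℕ} (ht : t < n) :
    ((SS n (t + 1) h m).filter fun x => x.1 ⟨t, ht⟩ ≠ ⟨t, ht⟩).card
      = (SS n t (h + 1) (m + 1)).card := by
  obtain ⟨T, hT⟩ : ∃ T : Fin n, T = ⟨t, ht⟩ := ⟨_, rfl⟩
  have hTv : T.val = t := by rw [hT]
  rw [← hT]
  have key : ∀ σ : Equiv.Perm (Fin n), ∀ P, St (t + 1) (σ, P) → σ T ≠ T →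
      σ T < T ∧ σ T ∉ P ∧ ∀ p ∈ P, σ T < p := by
    rintro σ P ⟨h1, h2, h3, h4⟩ hne
    simp only at h1 h2 h3 h4
    have hlt : σ T < T := by
      by_contra hc
      have h5 : T < σ T := lt_of_le_of_ne (not_lt.1 hc) (Ne.symm hne)
      have h6 := h2 (σ T) (by have := Fin.lt_def.1 h5; omega)
      rw [h1] at h6
      exact hne h6.symm
    have hnot : σ T ∉ P := by
      intro hp
      have := (h3 _ hp).2
      rw [h1] at this
      exact hne this.symm
    refine ⟨hlt, hnot, fun p hp => ?_⟩
    by_contra hc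
    have hlt2 : p < σ T := lt_of_le_of_ne (not_lt.1 hc) (by rintro rfl; exact hnot hp)
    exact (h4 p (σ T) hlt2 (by have := Fin.lt_def.1 hlt; omega) hnot (by rw [h1]; exact hlt.le)).1 hp
  refine Finset.card_bij (fun x _ => (x.1 * Equiv.swap (x.1 T) T, insert (x.1 T) x.2)) ?_ ?_ ?_
  · rintro ⟨σ, P⟩ hx
    rw [Finset.mem_filter, mem_SS] at hx
    obtain ⟨⟨hs, hc, hf⟩, hne⟩ := hx
    obtain ⟨k1, k2, k3⟩ := key σ P hs hne
    obtain ⟨h1, h2, h3, h4⟩ := hs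
    simp only at h1 h2 h3 h4 hc hf hne
    rw [mem_SS]
    obtain ⟨q, hq⟩ : ∃ q, q = σ T := ⟨_, rfl⟩
    have hσq : σ q = T := by rw [hq, h1]
    simp only [← hq] at hne k1 k2 k3 ⊢
    have e : ∀ i, (σ * Equiv.swap q T) i = if i = q then q else if i = T then T else σ i := by
      intro i
      simp only [Equiv.Perm.mul_apply, Equiv.swap_apply_def]
      split_ifs <;> grind
    refine ⟨⟨?_, ?_, ?_, ?_⟩, ?_, ?_⟩
    · intro i
      simp only [e]
      grind
    · intro i hi
      simp only [e]
      have := h2 i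
      have : i ≠ T → t + 1 ≤ i.val := fun h => by
        have : i.val ≠ T.val := fun h' => h (Fin.ext h')
        omega
      grind
    · intro p hp
      simp only [e]
      simp only [Finset.mem_insert] at hp
      rcases hp with rfl | hp
      · simp; omega
      · have h5 := h3 p hp
        have : p ≠ T := by rintro rfl; exact hne (hq.trans h5.2)
        have : p.val ≠ T.val := fun h' => this (Fin.ext h')
        refine ⟨by omega, ?_⟩
        grind
    · intro i j hij hjt hjP hj
      simp only [e] at hj ⊢
      simp only [Finset.mem_insert, not_or] at hjP ⊢
      have hjT : j ≠ T := by rintro rfl; omega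
      rw [if_neg hjP.1, if_neg hjT] at hj ⊢
      obtain ⟨a, b⟩ := h4 i j hij (by omega) hjP.2 hj
      have hiq : i ≠ q := by
        rintro rfl
        rw [hσq] at b
        have := h2 (σ j) (by have := Fin.lt_def.1 b; omega)
        rw [h1] at this
        have := congrArg Fin.val this
        have := Fin.lt_def.1 b
        omega
      have hiT : i ≠ T := by rintro rfl; have := Fin.lt_def.1 hij; omega
      rw [if_neg hiq, if_neg hiT]
      exact ⟨⟨hiq, a⟩, b⟩
    · rw [Finset.card_insert_of_notMem k2, hc]
    · have := fixedPts_swap (σ * Equiv.swap q T) q T (by rw [e]; simp) (by rw [e]; simp [hne.symm]) k1.ne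
      rw [mul_assoc, Equiv.swap_mul_self, mul_one] at this
      omega
  · rintro ⟨σ, P⟩ hx ⟨τ, Q⟩ hy hxy
    rw [Finset.mem_filter, mem_SS] at hx hy
    obtain ⟨a1, a2, a3⟩ := key σ P hx.1.1 hx.2
    obtain ⟨b1, b2, b3⟩ := key τ Q hy.1.1 hy.2
    simp only [Prod.mk.injEq] at hxy
    obtain ⟨c1, c2⟩ := hxy
    have hq : σ T = τ T := by
      have d1 : σ T ∈ insert (τ T) Q := by rw [← c2]; simp
      have d2 : τ T ∈ insert (σ T) P := by rw [c2]; simp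
      rw [Finset.mem_insert] at d1 d2
      rcases d1 with d1 | d1
      · exact d1
      rcases d2 with d2 | d2
      · exact d2.symm
      exact absurd (a3 _ d2) (not_lt.2 (b3 _ d1).le)
    rw [hq] at c1 c2 a2
    have e1 := mul_right_cancel c1
    have e2 : P = Q := by
      rw [← Finset.erase_insert a2, c2, Finset.erase_insert b2]
    rw [e1, e2]
  · rintro ⟨σ, P⟩ hx
    rw [mem_SS] at hx
    obtain ⟨⟨h1, h2, h3, h4⟩, hc, hf⟩ := hx
    simp only at h1 h2 h3 h4 hc hf
    have hne : P.Nonempty := by rw [← Finset.card_pos]; omega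
    obtain ⟨q, hq⟩ : ∃ q, q = P.min' hne := ⟨_, rfl⟩
    have hqP : q ∈ P := by rw [hq]; exact Finset.min'_mem _ _
    have hqm : ∀ p ∈ P, q ≤ p := fun p hp => by rw [hq]; exact Finset.min'_le _ _ hp
    obtain ⟨hqt, hσq⟩ := h3 q hqP
    have hσT : σ T = T := h2 T (by omega)
    have hqT : q ≠ T := by rintro rfl; omega
    have e : ∀ i, (σ * Equiv.swap q T) i = if i = q then T else if i = T then q else σ i := by
      intro i
      simp only [Equiv.Perm.mul_apply, Equiv.swap_apply_def]
      split_ifs <;> grind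
    have hlt : ∀ i : Fin n, i.val < t → (σ i).val < t := by
      intro i hi
      by_contra hcon
      have := h2 (σ i) (by omega)
      rw [h1] at this
      rw [← this] at hcon
      exact hcon hi
    have eT : (σ * Equiv.swap q T) T = q := by rw [e, if_neg hqT.symm, if_pos rfl]
    refine ⟨(σ * Equiv.swap q T, P.erase q), ?_, ?_⟩
    · rw [Finset.mem_filter, mem_SS]
      refine ⟨⟨⟨?_, ?_, ?_, ?_⟩, ?_, ?_⟩, ?_⟩
      · intro i
        simp only [e]
        grind
      · intro i hi
        simp only [e]
        have a1 : i ≠ q := by rintro rfl; omega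
        have a2 : i ≠ T := by rintro rfl; omega
        rw [if_neg a1, if_neg a2]
        exact h2 i (by omega)
      · intro p hp
        simp only [e]
        rw [Finset.mem_erase] at hp
        obtain ⟨b1, b2⟩ := h3 p hp.2
        have a2 : p ≠ T := by rintro rfl; omega
        rw [if_neg hp.1, if_neg a2]
        exact ⟨by omega, b2⟩
      · intro i j hij hjt hjP hj
        have hij' := Fin.lt_def.1 hij
        have hiT : i ≠ T := by rintro rfl; omega
        simp only [e] at hj ⊢
        simp only [Finset.mem_erase, not_and] at hjP ⊢
        by_cases hjq : j = q
        · have hiq : i ≠ q := by rw [← hjq]; exact hij.ne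
          rw [if_neg hiq, if_neg hiT, if_pos hjq]
          refine ⟨fun _ hi => ?_, ?_⟩
          · have := hqm i hi
            rw [← hjq] at this
            exact absurd hij (not_lt.2 this)
          · rw [Fin.lt_def, hTv]
            exact hlt i (by omega)
        · rw [if_neg hjq] at hj ⊢
          have hjT : j ≠ T := by
            rintro rfl
            rw [if_pos rfl] at hj
            have := Fin.le_def.1 hj
            omega
          have : j.val ≠ T.val := fun h' => hjT (Fin.ext h')
          rw [if_neg hjT] at hj ⊢
          obtain ⟨a, b⟩ := h4 i j hij (by omega) (hjP hjq) hj
          have hiq : i ≠ q := by rintro rfl; exact a hqP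
          rw [if_neg hiq, if_neg hiT]
          exact ⟨fun _ => a, b⟩
      · simp only
        rw [Finset.card_erase_of_mem hqP]
        omega
      · have := fixedPts_swap σ q T hσq hσT hqT
        simp only
        omega
      · simp only
        rw [eT]
        exact hqT
    · simp only [eT]
      rw [mul_assoc, Equiv.swap_mul_self, mul_one, Finset.insert_erase hqP]

open Classical in
lemma card_fixed {n t h m : ℕ} (ht : t < n) :
    ((SS n (t + 1) h (m + 1)).filter fun x => x.1 ⟨t, ht⟩ = ⟨t, ht⟩).card
      = (SS n t (h - 1) m).card := by
  obtain ⟨T, hT⟩ : ∃ T : Fin n, T = ⟨t, ht⟩ := ⟨_, rfl⟩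
  have hTv : T.val = t := by rw [hT]
  rw [← hT]
  have hTn : ∀ σ : Equiv.Perm (Fin n), ∀ P, St t (σ, P) → T ∉ P := by
    rintro σ P ⟨h1, h2, h3, h4⟩ hp
    have := (h3 T hp).1
    omega
  have key : ∀ σ : Equiv.Perm (Fin n), ∀ P, St (t + 1) (σ, P) → σ T = T → P.Nonempty → T ∈ P := by
    rintro σ P ⟨h1, h2, h3, h4⟩ hσ ⟨p, hp⟩
    by_contra hc
    simp only at h1 h2 h3 h4
    have hpt := (h3 p hp).1
    have hpT : p.val ≠ T.val := fun h' => hc (by rw [← Fin.ext h']; exact hp)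
    exact (h4 p T (by rw [Fin.lt_def]; omega) (by omega) hc hσ.ge).1 hp
  have fwd : ∀ σ : Equiv.Perm (Fin n), ∀ P, St (t + 1) (σ, P) → σ T = T → St t (σ, P.erase T) := by
    rintro σ P ⟨h1, h2, h3, h4⟩ hσ
    simp only at h1 h2 h3 h4
    refine ⟨h1, ?_, ?_, ?_⟩
    · intro i hi
      by_cases h : i = T
      · rw [h]; exact hσ
      · have : i.val ≠ T.val := fun h' => h (Fin.ext h')
        exact h2 i (by omega)
    · intro p hp
      rw [Finset.mem_erase] at hp
      have : p.val ≠ T.val := fun h' => hp.1 (Fin.ext h')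
      have := h3 p hp.2
      exact ⟨by omega, this.2⟩
    · intro i j hij hjt hjP hj
      simp only [Finset.mem_erase, not_and] at hjP ⊢
      have := h4 i j hij (by omega) (hjP (by rintro rfl; omega)) hj
      exact ⟨fun _ => this.1, this.2⟩
  rcases h with _ | h
  · congr 1
    ext ⟨σ, P⟩
    rw [Finset.mem_filter, mem_SS, mem_SS]
    constructor
    · rintro ⟨⟨hs, hc, hf⟩, hσ⟩
      simp only at hc hf hσ
      have := fwd σ P hs hσ
      have hP : P = ∅ := Finset.card_eq_zero.1 hc
      subst hP
      exact ⟨by simpa using this, by simp, by simp only; omega⟩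
    · rintro ⟨⟨h1, h2, h3, h4⟩, hc, hf⟩
      simp only at h1 h2 h3 h4 hc hf
      have hP : P = ∅ := Finset.card_eq_zero.1 (by simpa using hc)
      subst hP
      have hσT := h2 T (by omega)
      refine ⟨⟨⟨h1, fun i hi => h2 i (by omega), by simp, ?_⟩, by simp, by simp only; omega⟩, hσT⟩
      intro i j hij hjt hjP hj
      simp only at hj ⊢
      have hij' := Fin.lt_def.1 hij
      by_cases h : j = T
      · refine ⟨by simp, ?_⟩
        rw [h, hσT]
        by_contra hcon
        have hh := Fin.le_def.1 (not_lt.1 hcon)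
        have := h2 (σ i) (by omega)
        rw [h1] at this
        rw [← this] at hh
        rw [h] at hij'
        omega
      · have : j.val ≠ T.val := fun h' => h (Fin.ext h')
        exact h4 i j hij (by omega) hjP hj
  · refine Finset.card_bij (fun x _ => (x.1, x.2.erase T)) ?_ ?_ ?_
    · rintro ⟨σ, P⟩ hx
      rw [Finset.mem_filter, mem_SS] at hx
      obtain ⟨⟨hs, hc, hf⟩, hσ⟩ := hx
      simp only at hc hf hσ
      rw [mem_SS]
      refine ⟨fwd σ P hs hσ, ?_, ?_⟩
      · simp only
        rw [Finset.card_erase_of_mem (key σ P hs hσ (by rw [← Finset.card_pos]; omega))]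
        omega
      · simp only; omega
    · rintro ⟨σ, P⟩ hx ⟨τ, Q⟩ hy hxy
      rw [Finset.mem_filter, mem_SS] at hx hy
      obtain ⟨⟨hs, hc, hf⟩, hσ⟩ := hx
      obtain ⟨⟨hs', hc', hf'⟩, hσ'⟩ := hy
      simp only at hc hf hσ hc' hf' hσ'
      have a := key σ P hs hσ (by rw [← Finset.card_pos]; omega)
      have b := key τ Q hs' hσ' (by rw [← Finset.card_pos]; omega)
      simp only [Prod.mk.injEq] at hxy
      rw [hxy.1, ← Finset.insert_erase a, hxy.2, Finset.insert_erase b]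
    · rintro ⟨σ, P⟩ hx
      rw [mem_SS] at hx
      obtain ⟨hs, hc, hf⟩ := hx
      have hTP := hTn σ P hs
      obtain ⟨h1, h2, h3, h4⟩ := hs
      simp only at h1 h2 h3 h4 hc hf
      have hσT := h2 T (by omega)
      refine ⟨(σ, insert T P), ?_, ?_⟩
      · rw [Finset.mem_filter, mem_SS]
        refine ⟨⟨⟨h1, fun i hi => h2 i (by omega), ?_, ?_⟩, ?_, ?_⟩, hσT⟩
        · intro p hp
          simp only [Finset.mem_insert] at hp
          rcases hp with rfl | hp
          · exact ⟨by omega, hσT⟩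
          · have := h3 p hp
            exact ⟨by omega, this.2⟩
        · intro i j hij hjt hjP hj
          simp only [Finset.mem_insert, not_or] at hjP hj ⊢
          have : j.val ≠ T.val := fun h' => hjP.1 (Fin.ext h')
          have hij' := Fin.lt_def.1 hij
          have := h4 i j hij (by omega) hjP.2 hj
          exact ⟨⟨by rintro rfl; omega, this.1⟩, this.2⟩
        · simp only
          rw [Finset.card_insert_of_notMem hTP, hc]
          omega
        · simp only; omega
      · simp only
        rw [Finset.erase_insert hTP]

lemma card_SS (n : ℕ) : ∀ t h m : ℕ, t ≤ n → h ≤ m → (SS n t h m).card = Bal t m := by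
  intro t
  induction t with
  | zero =>
    intro h m _ hm
    rcases m with _ | m
    · have h0 : h = 0 := by omega
      subst h0
      rw [Bal, Finset.card_eq_one]
      refine ⟨(1, ∅), ?_⟩
      ext ⟨σ, P⟩
      rw [mem_SS, Finset.mem_singleton]
      constructor
      · rintro ⟨⟨h1, h2, h3, h4⟩, hc, hf⟩
        simp only at h1 h2 h3 h4 hc hf
        rw [Finset.card_eq_zero.1 hc]
        congr 1
        ext i
        simp [h2 i]
      · intro hx
        rw [Prod.mk.injEq] at hx
        obtain ⟨rfl, rfl⟩ := hx
        refine ⟨⟨by simp, by simp, by simp, by simp⟩, by simp, by simp [fixedPts]⟩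
    · rw [Bal, Finset.card_eq_zero, Finset.eq_empty_iff_forall_notMem]
      rintro ⟨σ, P⟩ hx
      rw [mem_SS] at hx
      have h1 : fixedPts σ ≤ n := by
        unfold fixedPts
        simpa using Finset.card_filter_le (Finset.univ : Finset (Fin n)) (fun i => σ i = i)
      have := hx.2.2
      simp only at this
      omega
  | succ t ih =>
    intro h m ht hm
    classical
    have hsplit := Finset.card_filter_add_card_filter_not (s := SS n (t + 1) h m)
      (fun x => x.1 ⟨t, ht⟩ = ⟨t, ht⟩)
    have hcl := card_closer (h := h) (m := m) (n := n) (t := t) ht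
    rw [ih (h + 1) (m + 1) (by omega) (by omega)] at hcl
    rcases m with _ | m
    · rw [Bal, ← hsplit, hcl, Nat.add_eq_right, Finset.card_eq_zero,
        Finset.eq_empty_iff_forall_notMem]
      rintro ⟨σ, P⟩ hx
      rw [Finset.mem_filter, mem_SS] at hx
      obtain ⟨⟨hs, hc, hf⟩, hσ⟩ := hx
      simp only at hc hf hσ
      have hP : P = ∅ := Finset.card_eq_zero.1 (by omega)
      subst hP
      obtain ⟨h1, h2, h3, h4⟩ := hs
      have : St t (σ, (∅ : Finset (Fin n))) := by
        refine ⟨h1, ?_, by simp, fun i j hij hj => h4 i j hij (by omega)⟩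
        intro i hi
        by_cases h : i = ⟨t, ht⟩
        · rw [h]; exact hσ
        · have : i.val ≠ t := fun h' => h (Fin.ext h')
          exact h2 i (by omega)
      have := fixedPts_ge _ _ this rfl
      omega
    · have hfx := card_fixed (h := h) (m := m) (n := n) (t := t) ht
      rw [ih (h - 1) m (by omega) (by omega)] at hfx
      rw [Bal, ← hsplit]
      exact congrArg₂ _ hfx hcl

lemma iCount_eq (n k : ℕ) : iCount321 n k = Bal n k := by
  rw [← card_SS n n 0 k le_rfl (Nat.zero_le _), iCount321, ← Nat.card_eq_finsetCard]
  have key : ∀ σ : Equiv.Perm (Fin n), (IsInvolution σ ∧ Avoids321 σ ∧ fixedPts σ = k) ↔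
      (σ, (∅ : Finset (Fin n))) ∈ SS n n 0 k := by
    intro σ
    rw [mem_SS]
    constructor
    · rintro ⟨h1, h2, h3⟩
      refine ⟨⟨h1, fun i hi => absurd i.isLt (by omega), by simp, ?_⟩, by simp, by simp only; omega⟩
      intro i j hij _ _ hj
      simp only at hj ⊢
      refine ⟨by simp, ?_⟩
      by_contra hc
      have hlt : σ j < σ i :=
        lt_of_le_of_ne (not_lt.1 hc) (fun h => hij.ne' (σ.injective h))
      exact h2 ⟨i, j, σ i, hij, lt_of_le_of_lt hj hlt, by rw [h1 i]; exact lt_of_lt_of_le hij hj, hlt⟩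
    · rintro ⟨⟨h1, _, _, h4⟩, _, hf⟩
      simp only at h1 h4 hf
      refine ⟨h1, ?_, by omega⟩
      rintro ⟨a, b, c, hab, hbc, hcb, hba⟩
      rcases le_or_gt b (σ b) with hb | hb
      · exact absurd (h4 a b hab b.isLt (by simp) hb).2 (not_lt.2 hba.le)
      · have := (h4 (σ c) (σ b) hcb (σ b).isLt (by simp) (by rw [h1]; exact hb.le)).2
        rw [h1, h1] at this
        exact absurd this (not_lt.2 hbc.le)
  refine Nat.card_congr
    { toFun := fun x => ⟨(x.1, ∅), (key x.1).1 x.2⟩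
      invFun := fun y => ⟨y.1.1, (key y.1.1).2 ?_⟩
      left_inv := fun x => rfl
      right_inv := ?_ }
  · have h1 := y.2
    have h2 : y.1.2 = ∅ := Finset.card_eq_zero.1 ((mem_SS _).1 h1).2.1
    rw [← h2]
    exact h1
  · rintro ⟨⟨σ, P⟩, hy⟩
    have h2 : P = ∅ := Finset.card_eq_zero.1 ((mem_SS _).1 hy).2.1
    subst h2
    rfl

lemma Bal_odd : ∀ t m : ℕ, Odd (t + m) → Bal t m = 0 := by
  intro t
  induction t with
  | zero =>
    intro m hm
    rcases m with _ | m
    · simp at hm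
    · rfl
  | succ t ih =>
    intro m hm
    rcases m with _ | m
    · rw [Bal]; exact ih 1 (by simpa using hm)
    · rw [Bal, ih m (by grind), ih (m + 2) (by grind)]

lemma Bal_gt : ∀ t m : ℕ, t < m → Bal t m = 0 := by
  intro t
  induction t with
  | zero =>
    intro m hm
    rcases m with _ | m
    · simp at hm
    · rfl
  | succ t ih =>
    intro m hm
    rcases m with _ | m
    · omega
    · rw [Bal, ih m (by omega), ih (m + 2) (by omega)]

lemma Bal_even : ∀ t m r : ℕ, t = m + 2 * r →
    (Bal t m : ℤ) = (t.choose r : ℤ) - (if r = 0 then 0 else (t.choose (r - 1) : ℤ)) := by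
  intro t
  induction t with
  | zero =>
    intro m r h
    have : m = 0 := by omega
    have : r = 0 := by omega
    subst_vars
    simp [Bal]
  | succ t ih =>
    intro m r h
    rcases m with _ | m
    · obtain ⟨s, rfl⟩ : ∃ s, r = s + 1 := ⟨r - 1, by omega⟩
      rw [Bal, ih 1 s (by omega)]
      have hsym : t.choose (s + 1) = t.choose s := by
        rw [← Nat.choose_symm_of_eq_add (n := t) (a := s + 1) (b := s) (by omega)]
      rcases s with _ | s
      · have : t = 1 := by omega
        subst this
        simp
      · simp [Nat.choose_succ_succ] at hsym ⊢
        rw [hsym]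
        ring
    · rcases r with _ | r
      · rw [Bal, Bal_gt t (m + 2) (by omega)]
        have := ih m 0 (by omega)
        push_cast
        rw [this]
        simp
      · rw [Bal]
        push_cast
        rw [ih m (r + 1) (by omega), ih (m + 2) r (by omega)]
        rcases r with _ | r
        · simp
        · simp [Nat.choose_succ_succ]
          ring

lemma Bal_formula (t m r : ℕ) (h : t = m + 2 * r) :
    (t + 1) * Bal t m = (m + 1) * (t + 1).choose r := by
  have h1 := Bal_even t m r h
  zify
  rw [h1]
  rcases r with _ | r
  · simp; omega
  · simp only [Nat.add_eq_zero_iff, one_ne_zero, and_false, if_false, Nat.add_sub_cancel]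
    have a : (t.choose (r + 1) : ℤ) * (r + 1) = t.choose r * (t - r) := by
      have := Nat.choose_succ_right_eq t r
      zify [show r ≤ t by omega] at this
      exact this
    have b : ((t + 1).choose (r + 1) : ℤ) = t.choose r + t.choose (r + 1) := by
      rw [Nat.choose_succ_succ]; push_cast; rfl
    rw [b]
    have hz : (t : ℤ) = m + 2 * (r + 1) := by exact_mod_cast h
    have hm : (m : ℤ) = t - 2 * (r + 1) := by omega
    rw [hm]
    linear_combination 2 * a

/-- For all `n ≥ 1`, `0 ≤ k ≤ n` with `n + k` even,
`(n+1) · i_n^k(321) = (k+1) · C(n+1, (n-k)/2)`; when `n + k` is odd, `i_n^k(321) = 0`. -/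
theorem statement4 (n k : ℕ) (hn : 1 ≤ n) (hk : k ≤ n) :
    (Even (n + k) → (n + 1) * iCount321 n k = (k + 1) * (n + 1).choose ((n - k) / 2)) ∧
    (Odd (n + k) → iCount321 n k = 0) := by
  rw [iCount_eq]
  refine ⟨fun h => Bal_formula n k _ ?_, fun h => Bal_odd n k h⟩
  obtain ⟨a, ha⟩ := h
  omega
end

section
/- For all integers n ≥ 1 and 0 ≤ k ≤ n, the number of 132-avoiding involutions of {1,…,n} with exactly k fixed points, the number of 213-avoiding involutions of {1,…,n} with exactly k fixed points, and the number of 321-avoiding involutions of {1,…,n} with exactly k fixed points are all equal: i_n^k(132) = i_n^k(213) = i_n^k(321). -/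
/-- A permutation of `Fin n` avoids the pattern 132. -/
def Avoids132 {n : ℕ} (π : Equiv.Perm (Fin n)) : Prop :=
  ¬ ∃ i₁ i₂ i₃ : Fin n, i₁ < i₂ ∧ i₂ < i₃ ∧ (π i₁ < π i₃ ∧ π i₃ < π i₂)

/-- A permutation of `Fin n` avoids the pattern 213. -/
def Avoids213 {n : ℕ} (π : Equiv.Perm (Fin n)) : Prop :=
  ¬ ∃ i₁ i₂ i₃ : Fin n, i₁ < i₂ ∧ i₂ < i₃ ∧ (π i₂ < π i₁ ∧ π i₁ < π i₃)

/-- `i_n^k(132)`: the number of 132-avoiding involutions of `{1, …, n}` with exactly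
`k` fixed points. -/
noncomputable def iCount132 (n k : ℕ) : ℕ :=
  Nat.card {π : Equiv.Perm (Fin n) // IsInvolution π ∧ Avoids132 π ∧ fixedPts π = k}

/-- `i_n^k(213)`: the number of 213-avoiding involutions of `{1, …, n}` with exactly
`k` fixed points. -/
noncomputable def iCount213 (n k : ℕ) : ℕ :=
  Nat.card {π : Equiv.Perm (Fin n) // IsInvolution π ∧ Avoids213 π ∧ fixedPts π = k}

/-- insert a fixed point at x -/
def extP {n : ℕ} (x : Fin (n+1)) (σ : Equiv.Perm (Fin n)) : Equiv.Perm (Fin (n+1)) :=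
  ((finSuccEquiv' x).trans (Equiv.optionCongr σ)).trans (finSuccEquiv' x).symm

theorem extP_self {n : ℕ} (x : Fin (n+1)) (σ : Equiv.Perm (Fin n)) : extP x σ x = x := by
  simp [extP]

theorem extP_succAbove {n : ℕ} (x : Fin (n+1)) (σ : Equiv.Perm (Fin n)) (i : Fin n) :
    extP x σ (x.succAbove i) = x.succAbove (σ i) := by
  simp [extP]

theorem extP_inj {n : ℕ} (x : Fin (n+1)) : Function.Injective (extP x) := by
  intro σ τ h
  ext i
  have := congrArg (fun e => e (x.succAbove i)) h
  simp only [extP_succAbove] at this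
  rw [Fin.succAbove_right_injective this]

theorem extP_surj {n : ℕ} (x : Fin (n+1)) (π : Equiv.Perm (Fin (n+1))) (h : π x = x) :
    ∃ σ, extP x σ = π := by
  have h1 : ∀ i, ∃ j, x.succAbove j = π (x.succAbove i) := by
    intro i
    apply Fin.exists_succAbove_eq
    intro h2
    exact Fin.succAbove_ne x i (π.injective (h2.trans h.symm))
  choose f hf using h1
  have hinj : Function.Injective f := by
    intro i j hij
    have := hf i
    rw [hij, hf j] at this
    exact (Fin.succAbove_right_injective (π.injective this)).symm
  refine ⟨Equiv.ofBijective f (Finite.injective_iff_bijective.1 hinj), ?_⟩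
  ext i
  by_cases hi : i = x
  · subst hi; rw [extP_self, h]
  · obtain ⟨j, rfl⟩ := Fin.exists_succAbove_eq hi
    rw [extP_succAbove, ← hf]; rfl

theorem card_ext {n : ℕ} (x : Fin (n+1)) (P : Equiv.Perm (Fin n) → Prop)
    (Q : Equiv.Perm (Fin (n+1)) → Prop) (h : ∀ σ, P σ ↔ Q (extP x σ)) :
    Nat.card {σ // P σ} = Nat.card {π : Equiv.Perm (Fin (n+1)) // π x = x ∧ Q π} := by
  apply Nat.card_eq_of_bijective
    (fun σ => ⟨extP x σ.1, extP_self x _, (h _).1 σ.2⟩ : {σ // P σ} → {π : Equiv.Perm (Fin (n+1)) // π x = x ∧ Q π})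
  constructor
  · intro a b hab
    exact Subtype.ext (extP_inj x (congrArg Subtype.val hab))
  · rintro ⟨π, h1, h2⟩
    obtain ⟨σ, rfl⟩ := extP_surj x π h1
    exact ⟨⟨σ, (h _).2 h2⟩, rfl⟩

theorem extP_invol {n : ℕ} (x : Fin (n+1)) (σ : Equiv.Perm (Fin n)) :
    IsInvolution σ ↔ IsInvolution (extP x σ) := by
  constructor
  · intro h i
    by_cases hi : i = x
    · subst hi; rw [extP_self, extP_self]
    · obtain ⟨j, rfl⟩ := Fin.exists_succAbove_eq hi
      rw [extP_succAbove, extP_succAbove, h]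
  · intro h i
    have := h (x.succAbove i)
    rw [extP_succAbove, extP_succAbove] at this
    exact Fin.succAbove_right_injective this

theorem extP_fixed {n : ℕ} (x : Fin (n+1)) (σ : Equiv.Perm (Fin n)) :
    fixedPts (extP x σ) = fixedPts σ + 1 := by
  have : (Finset.univ.filter fun i => extP x σ i = i) =
      insert x ((Finset.univ.filter fun i => σ i = i).map x.succAboveEmb) := by
    ext i
    by_cases hi : i = x
    · subst hi; simp [extP_self]
    · obtain ⟨j, rfl⟩ := Fin.exists_succAbove_eq hi
      simp [extP_succAbove, hi]
  unfold fixedPts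
  rw [this, Finset.card_insert_of_notMem, Finset.card_map]
  simp [Fin.succAbove_ne]

theorem extP_forall {n : ℕ} (x : Fin (n+1)) (P : Fin (n+1) → Prop) :
    (∀ i, i ≠ x → P i) ↔ ∀ i : Fin n, P (x.succAbove i) := by
  constructor
  · intro h i; exact h _ (Fin.succAbove_ne x i)
  · intro h i hi
    obtain ⟨j, rfl⟩ := Fin.exists_succAbove_eq hi
    exact h j

theorem fixed_swap {n : ℕ} (π : Equiv.Perm (Fin n)) (a b : Fin n) (hab : a ≠ b)
    (ha : π a = b) (hb : π b = a) : fixedPts (Equiv.swap a b * π) = fixedPts π + 2 := by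
  have : (Finset.univ.filter fun i => (Equiv.swap a b * π) i = i) =
      insert a (insert b ((Finset.univ.filter fun i => π i = i))) := by
    ext i
    simp only [Finset.mem_filter, Finset.mem_insert, Finset.mem_univ, true_and]
    by_cases hi : i = a
    · subst hi; simp [ha]
    by_cases hj : i = b
    · subst hj; simp [hb]
    have h1 : π i ≠ a := fun h => hj (π.injective (h.trans hb.symm))
    have h2 : π i ≠ b := fun h => hi (π.injective (h.trans ha.symm))
    simp [hi, hj, Equiv.swap_apply_of_ne_of_ne h1 h2]
  unfold fixedPts
  rw [this, Finset.card_insert_of_notMem, Finset.card_insert_of_notMem]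
  · simp [hb, hab]
  · simp [ha, hab, hab.symm]

theorem swap_other {n : ℕ} (π : Equiv.Perm (Fin n)) (a b : Fin n)
    (ha : π a = b) (hb : π b = a) (i : Fin n) (hi : i ≠ a) (hj : i ≠ b) :
    (Equiv.swap a b * π) i = π i := by
  have h1 : π i ≠ a := fun h => hj (π.injective (h.trans hb.symm))
  have h2 : π i ≠ b := fun h => hi (π.injective (h.trans ha.symm))
  simp [Equiv.swap_apply_of_ne_of_ne h1 h2]

theorem swap_other' {n : ℕ} (π : Equiv.Perm (Fin n)) (a b : Fin n)
    (ha : π a = a) (hb : π b = b) (i : Fin n) (hi : i ≠ a) (hj : i ≠ b) :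
    (Equiv.swap a b * π) i = π i := by
  have h1 : π i ≠ a := fun h => hi (π.injective (h.trans ha.symm))
  have h2 : π i ≠ b := fun h => hj (π.injective (h.trans hb.symm))
  simp [Equiv.swap_apply_of_ne_of_ne h1 h2]

theorem invol_swap {n : ℕ} (π : Equiv.Perm (Fin n)) (a b : Fin n)
    (ha : π a = b) (hb : π b = a) (h : IsInvolution π) :
    IsInvolution (Equiv.swap a b * π) := by
  intro i
  by_cases hi : i = a
  · subst hi; simp [ha]
  by_cases hj : i = b
  · subst hj; simp [hb]
  have h1 : π i ≠ a := fun h => hj (π.injective (h.trans hb.symm))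
  have h2 : π i ≠ b := fun h => hi (π.injective (h.trans ha.symm))
  rw [swap_other π a b ha hb i hi hj, swap_other π a b ha hb _ h1 h2, h]

theorem invol_swap' {n : ℕ} (π : Equiv.Perm (Fin n)) (a b : Fin n)
    (ha : π a = a) (hb : π b = b) (h : IsInvolution π) :
    IsInvolution (Equiv.swap a b * π) := by
  intro i
  by_cases hi : i = a
  · subst hi; simp [ha, hb]
  by_cases hj : i = b
  · subst hj; simp [hb, ha]
  have h1 : π i ≠ a := fun h => hi (π.injective (h.trans ha.symm))
  have h2 : π i ≠ b := fun h => hj (π.injective (h.trans hb.symm))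
  rw [swap_other' π a b ha hb i hi hj, swap_other' π a b ha hb _ h1 h2, h]

theorem card_split {α : Type*} [Finite α] (P Q : α → Prop) :
    Nat.card {a // P a} = Nat.card {a // P a ∧ Q a} + Nat.card {a // P a ∧ ¬ Q a} := by
  classical
  have := Fintype.ofFinite α
  simp only [Nat.card_eq_fintype_card, Fintype.card_subtype]
  rw [← Finset.card_filter_add_card_filter_not (s := Finset.univ.filter P) Q, Finset.filter_filter, Finset.filter_filter]

theorem card_zero {α : Type*} (P : α → Prop) (h : ∀ a, ¬ P a) : Nat.card {a // P a} = 0 := by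
  have : IsEmpty {a // P a} := ⟨fun a => h a.1 a.2⟩
  exact Nat.card_of_isEmpty

theorem card_iff {α : Type*} (P Q : α → Prop) (h : ∀ a, P a ↔ Q a) :
    Nat.card {a // P a} = Nat.card {a // Q a} := Nat.card_congr (Equiv.subtypeEquivRight h)

/-- ballot numbers -/
def ballot : ℕ → ℕ → ℕ
  | 0, 0 => 1
  | 0, _ + 1 => 0
  | n + 1, 0 => ballot n 1
  | n + 1, k + 1 => ballot n k + ballot n (k + 2)

theorem count_openers {n : ℕ} (π : Equiv.Perm (Fin n)) (h : IsInvolution π) :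
    n = 2 * (Finset.univ.filter fun i => i < π i).card + fixedPts π := by
  have h1 : (Finset.univ.filter fun i => π i < i).card = (Finset.univ.filter fun i => i < π i).card := by
    apply Finset.card_bij (fun i _ => π i)
    · intro a ha; simpa [h a] using ha
    · intro a _ b _ hab; exact π.injective hab
    · intro b hb; exact ⟨π b, by simpa [h b] using hb, h b⟩
  have h2 := Finset.card_filter_add_card_filter_not (s := (Finset.univ : Finset (Fin n))) (fun i => i < π i)
  have h3 := Finset.card_filter_add_card_filter_not (s := (Finset.univ.filter fun i => ¬ i < π i)) (fun i => π i < i)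
  rw [Finset.filter_filter, Finset.filter_filter] at h3
  have h4 : (Finset.univ.filter fun i => ¬ i < π i ∧ π i < i) = Finset.univ.filter fun i => π i < i := by
    ext i; simp; intro h; exact h.le
  have h5 : (Finset.univ.filter fun i => ¬ i < π i ∧ ¬ π i < i) = Finset.univ.filter fun i => π i = i := by
    ext i; simp; constructor
    · rintro ⟨a, b⟩; exact le_antisymm a b
    · intro h; rw [h]; simp
  rw [h4, h5] at h3
  simp only [Finset.card_univ, Fintype.card_fin] at h2
  unfold fixedPts
  omega

theorem c132_213 (n k : ℕ) : iCount132 n k = iCount213 n k := by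
  unfold iCount132 iCount213
  apply Nat.card_congr
  refine Equiv.subtypeEquiv (Fin.revPerm.permCongr) ?_
  intro π
  have hI : IsInvolution π ↔ IsInvolution (Fin.revPerm.permCongr π) := by
    unfold IsInvolution
    constructor
    · intro h i; simp [Equiv.permCongr_apply, h]
    · intro h i; simpa [Equiv.permCongr_apply] using h i.rev
  have hA : Avoids132 π ↔ Avoids213 (Fin.revPerm.permCongr π) := by
    unfold Avoids132 Avoids213
    rw [not_iff_not]
    constructor
    · rintro ⟨a, b, c, h1, h2, h3, h4⟩
      exact ⟨c.rev, b.rev, a.rev, by simpa using h2, by simpa using h1, by simpa [Equiv.permCongr_apply] using h4,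
        by simpa [Equiv.permCongr_apply] using h3⟩
    · rintro ⟨a, b, c, h1, h2, h3, h4⟩
      exact ⟨c.rev, b.rev, a.rev, by simpa using h2, by simpa using h1, by simpa [Equiv.permCongr_apply] using h4,
        by simpa [Equiv.permCongr_apply] using h3⟩
  have hF : fixedPts π = fixedPts (Fin.revPerm.permCongr π) := by
    unfold fixedPts
    apply Finset.card_bij (fun i _ => i.rev)
    · intro a ha; simpa [Equiv.permCongr_apply] using ha
    · intro a _ b _ hab; simpa using hab
    · intro b hb; refine ⟨b.rev, ?_, by simp⟩
      simp [Equiv.permCongr_apply] at hb ⊢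
      exact Fin.rev_injective (by simpa using hb)
  rw [hI, hA, hF]


/-! 132 side -/

def Av132Off {n : ℕ} (x : Fin n) (π : Equiv.Perm (Fin n)) : Prop :=
  ∀ i, i ≠ x → ∀ j, j ≠ x → ∀ l, l ≠ x → i < j → j < l → π i < π l → π l < π j → False

theorem extP_132 {n : ℕ} (x : Fin (n+1)) (σ : Equiv.Perm (Fin n)) :
    Avoids132 σ ↔ Av132Off x (extP x σ) := by
  unfold Avoids132 Av132Off
  simp only [extP_forall, extP_succAbove, Fin.succAbove_lt_succAbove_iff]
  push Not
  constructor
  · intro h i j l h1 h2 h3 h4; exact absurd h4 (not_lt.2 (h i j l h1 h2 h3))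
  · intro h i j l h1 h2 h3; by_contra h4; exact h i j l h1 h2 h3 (not_le.1 h4)

theorem openers_set {n : ℕ} (S : Fin n → Prop) (π : Equiv.Perm (Fin n)) (hI : IsInvolution π)
    (hS : ∀ i, S i → S (π i)) (hO : ∀ i, i < π i → S i)
    (hA : ∀ i, S i → ∀ j, S j → ∀ l, S l → i < j → j < l → π i < π l → π l < π j → False)
    (c : ℕ) (hc : n = 2 * c + fixedPts π) (hcS : ∀ i : Fin n, i.val < c → S i) (i : Fin n) :
    i < π i ↔ i.val < c := by
  have hcard := count_openers π hI
  have hcard' : (Finset.univ.filter fun i => i < π i).card = c := by omega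
  have hdown : ∀ i j : Fin n, i < π i → j < i → S j → j < π j := by
    intro i j hi hj hSj
    by_contra h
    have hSi := hO i hi
    rcases lt_or_eq_of_le (not_lt.1 h) with h | h
    · have := hA (π j) (hS j hSj) i hSi (π i) (hS i hSi) (h.trans hj) hi
      rw [hI, hI] at this
      exact this hj hi
    · have := hA j hSj i hSi (π i) (hS i hSi) hj hi
      rw [hI, h] at this
      exact this hj hi
  have hle : c ≤ n := by omega
  have hcc : (Finset.univ.filter fun i : Fin n => i.val < c).card = c := by
    simp [Fin.card_filter_val_lt, hle]
  have hsub : (Finset.univ.filter fun i => i < π i) ⊆ (Finset.univ.filter fun i : Fin n => i.val < c) := by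
    intro a ha
    by_contra hb
    simp only [Finset.mem_filter, Finset.mem_univ, true_and] at ha hb
    have : insert a (Finset.univ.filter fun i : Fin n => i.val < c) ⊆ (Finset.univ.filter fun i => i < π i) := by
      intro y hy
      simp only [Finset.mem_filter, Finset.mem_univ, true_and, Finset.mem_insert] at hy ⊢
      rcases hy with rfl | hy
      · exact ha
      · exact hdown a y ha (Fin.lt_def.2 (by omega)) (hcS y hy)
    have := Finset.card_le_card this
    rw [Finset.card_insert_of_notMem (by simpa using hb)] at this
    omega
  have heq := Finset.eq_of_subset_of_card_le hsub (by omega)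
  have := congrArg (fun s => i ∈ s) heq
  simpa using this

theorem openers_132 {n : ℕ} (π : Equiv.Perm (Fin n)) (hI : IsInvolution π) (hA : Avoids132 π)
    (c : ℕ) (hc : n = 2 * c + fixedPts π) (i : Fin n) : i < π i ↔ i.val < c := by
  apply openers_set (fun _ => True) π hI <;> try simp
  · intro i j l h1 h2 h3; by_contra h4; exact hA ⟨i, j, l, h1, h2, h3, not_le.1 h4⟩
  · exact hc

theorem openers_132x {n : ℕ} (π : Equiv.Perm (Fin n)) (hI : IsInvolution π) (x : Fin n) (hx : π x = x)
    (hA : Av132Off x π)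
    (hc : n = 2 * x.val + fixedPts π) (i : Fin n) : i < π i ↔ i < x := by
  rw [Fin.lt_def (b := x)]
  apply openers_set (fun i => i ≠ x) π hI ?_ ?_ hA x.val hc
  · intro i hi; exact Fin.ne_of_lt hi
  · intro i hi h; exact hi (π.injective (h.trans hx.symm))
  · rintro i hi rfl; rw [hx] at hi; exact lt_irrefl _ hi

theorem case_U (n k c : ℕ) (hc : n + 1 = 2 * c + (k + 1)) :
    Nat.card {π : Equiv.Perm (Fin (n+1)) // (IsInvolution π ∧ Avoids132 π ∧ fixedPts π = k + 1) ∧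
      π ⟨c, by omega⟩ = ⟨c, by omega⟩} = iCount132 n k := by
  unfold iCount132
  set x : Fin (n+1) := ⟨c, by omega⟩ with hx
  rw [card_ext x _ (fun π => IsInvolution π ∧ Av132Off x π ∧ fixedPts π = k + 1)]
  · apply card_iff
    intro π
    constructor
    · rintro ⟨⟨h1, h2, h3⟩, h4⟩
      exact ⟨h4, h1, fun i _ j _ l _ a b c d => h2 ⟨i, j, l, a, b, c, d⟩, h3⟩
    · rintro ⟨h4, h1, h2, h3⟩
      refine ⟨⟨h1, ?_, h3⟩, h4⟩
      have ho := openers_132x π h1 x h4 h2 (by rw [h3]; exact hc)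
      have hinv : ∀ i, π (π i) = i := h1
      rintro ⟨i, j, l, a, b, c, d⟩
      by_cases e1 : i = x
      · have := ho j; have := ho l; have := ho (π j); have := ho (π l)
        grind
      by_cases e2 : j = x
      · have := ho i; have := ho (π i)
        grind
      by_cases e3 : l = x
      · have := ho i; have := ho (π i)
        grind
      exact h2 i e1 j e2 l e3 a b c d
  · intro σ
    rw [← extP_invol, ← extP_132, extP_fixed]
    simp


theorem core_fwd {α : Type*} [LinearOrder α] (f g : α → α) (x p : α) (hxp : x < p)
    (hI : ∀ i, f (f i) = i) (fx : f x = p) (fp : f p = x) (gx : g x = x) (gp : g p = p)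
    (hg : ∀ i, i ≠ x → i ≠ p → g i = f i) (ho : ∀ i, i < f i ↔ i ≤ x)
    (hmin : ∀ q, q < p → f q ≠ q)
    (hA : ∀ i j l, i < j → j < l → f i < f l → f l < f j → False) :
    ∀ i, i ≠ x → ∀ j, j ≠ x → ∀ l, l ≠ x → i < j → j < l → g i < g l → g l < g j → False := by
  have hcl : ∀ q, x < q → x < f q → f q = q := by
    intro q h1 h2
    have h3 := ho q; have h4 := ho (f q); rw [hI] at h4
    grind
  intro i hi j hj l hl hij hjl h1 h2
  by_cases e1 : i = p
  · subst e1
    simp only [hg j hj (by grind), hg l hl (by grind), gp] at h1 h2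
    have := hcl j (by grind) (by grind)
    have := hcl l (by grind) (by grind)
    grind
  by_cases e2 : j = p
  · subst e2
    simp only [hg i hi (by grind), hg l hl (by grind), gp] at h1 h2
    have h3 := hcl l (by grind)
    have h4 := hA i x l
    have h5 := hA i j l
    have h6 := hcl i
    have h7 := hmin i
    have h8 : f l ≠ x := by grind
    grind
  by_cases e3 : l = p
  · subst e3
    simp only [hg i hi (by grind), hg j hj (by grind), gp] at h1 h2
    have h4 := hA i j x
    have := ho j
    grind
  simp only [hg i hi e1, hg j hj e2, hg l hl e3] at h1 h2
  exact hA i j l hij hjl h1 h2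

theorem core_bwd {α : Type*} [LinearOrder α] (f g : α → α) (x p : α) (hxp : x < p)
    (hI : ∀ i, g (g i) = i) (fx : f x = p) (fp : f p = x) (gx : g x = x) (gp : g p = p)
    (hg : ∀ i, i ≠ x → i ≠ p → f i = g i) (ho : ∀ i, i < g i ↔ i < x)
    (hmin : ∀ q, q < p → q ≠ x → g q ≠ q)
    (hA : ∀ i, i ≠ x → ∀ j, j ≠ x → ∀ l, l ≠ x → i < j → j < l → g i < g l → g l < g j → False) :
    ∀ i j l, i < j → j < l → f i < f l → f l < f j → False := by
  have hcl : ∀ q, x < q → x < g q → g q = q := by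
    intro q h1 h2
    have h3 := ho q; have h4 := ho (g q); rw [hI] at h4
    grind
  have hop : ∀ q, q < x → x < g q := by
    intro q h1
    have h3 := ho q; have h4 := ho (g q); rw [hI] at h4
    have h5 : g q ≠ x := by grind
    grind
  have hne : ∀ q, q ≠ x → g q ≠ x := by grind
  have hne' : ∀ q, q ≠ p → g q ≠ p := by grind
  intro i j l hij hjl h1 h2
  by_cases e1 : i = x
  · subst e1
    rw [fx] at h1
    by_cases e2 : j = p
    · grind
    by_cases e3 : l = p
    · grind
    simp only [hg j (by grind) e2, hg l (by grind) e3] at h1 h2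
    have := hcl j (by grind) (by grind)
    have := hcl l (by grind) (by grind)
    grind
  by_cases e2 : j = x
  · subst e2
    rw [fx] at h2
    by_cases e3 : l = p
    · have h3 := hop i hij
      have h4 := hg i (by grind) (by grind)
      rw [e3, fp, h4] at h1
      exact lt_asymm h1 h3
    simp only [hg i (by grind) (by grind), hg l (by grind) e3] at h1 h2
    have := hop i hij
    have := hcl l (by grind) (by grind)
    have := hmin l
    grind
  by_cases e3 : l = x
  · subst e3
    simp only [fx] at h1 h2
    simp only [hg i (by grind) (by grind), hg j (by grind) (by grind)] at h1 h2
    have := hA i (by grind) j (by grind) p (by grind)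
    grind
  by_cases e4 : i = p
  · subst e4
    simp only [fp] at h1 h2
    simp only [hg j (by grind) (by grind), hg l (by grind) (by grind)] at h1 h2
    have := hcl j (by grind) (by grind)
    have := hcl l (by grind) (by grind)
    grind
  by_cases e5 : j = p
  · subst e5
    simp only [fp] at h1 h2
    simp only [hg i (by grind) (by grind), hg l (by grind) (by grind)] at h1 h2
    have := hA i (by grind) j (by grind) l (by grind)
    grind
  by_cases e6 : l = p
  · subst e6
    simp only [fp] at h1 h2
    simp only [hg i (by grind) (by grind), hg j (by grind) (by grind)] at h1 h2
    have := hop i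
    have := hcl j
    have := hmin j
    grind
  simp only [hg i (by grind) (by grind), hg j (by grind) (by grind), hg l (by grind) (by grind)] at h1 h2
  exact hA i e1 j e2 l e3 hij hjl h1 h2


theorem case_D (n k x : ℕ) (hc : n + 1 = 2 * (x + 1) + k) :
    Nat.card {π : Equiv.Perm (Fin (n+1)) // (IsInvolution π ∧ Avoids132 π ∧ fixedPts π = k) ∧
      ¬ π ⟨x + 1, by omega⟩ = ⟨x + 1, by omega⟩} = iCount132 n (k + 1) := by
  unfold iCount132
  set C : Fin (n+1) := ⟨x + 1, by omega⟩ with hC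
  set X : Fin (n+1) := ⟨x, by omega⟩ with hX
  have hXC : ∀ i : Fin (n+1), i.val < x + 1 ↔ i ≤ X := by
    intro i; rw [Fin.le_def]; change _ ↔ i.val ≤ x; omega
  have hXC2 : ∀ i : Fin (n+1), X < i ↔ C ≤ i := by
    intro i; rw [Fin.le_def, Fin.lt_def]; change x < i.val ↔ x + 1 ≤ i.val; omega
  rw [card_ext X _ (fun π => IsInvolution π ∧ Av132Off X π ∧ fixedPts π = k + 2)]
  swap
  · intro σ
    rw [← extP_invol, ← extP_132, extP_fixed]
    simp
  have key : ∀ π : Equiv.Perm (Fin (n+1)), IsInvolution π → Avoids132 π → fixedPts π = k → ¬ π C = C →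
      X < π X ∧ (∀ i, i < π i ↔ i ≤ X) ∧ ∀ q, q < π X → π q ≠ q := by
    intro π h1 h2 h3 h4
    have ho := openers_132 π h1 h2 (x+1) (by rw [h3]; exact hc)
    simp only [hXC] at ho
    refine ⟨(ho X).2 le_rfl, ho, ?_⟩
    intro q hq hqq
    have hI : ∀ i, π (π i) = i := h1
    have a1 : X < q := by have := ho q; grind
    have a2 : C ≤ q := (hXC2 q).1 a1
    have a3 : X < C := (hXC2 C).2 le_rfl
    have a4 : π C < C := by have := ho C; grind
    have a5 : π C ≤ X := by
      by_contra hh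
      exact absurd ((hXC2 _).1 (not_le.1 hh)) (not_le.2 a4)
    have a6 : π C ≠ X := by
      intro hh
      have : π X = C := by rw [← hh, hI]
      grind
    apply h2
    refine ⟨π C, X, q, lt_of_le_of_ne a5 a6, a1, ?_, ?_⟩
    · rw [hI, hqq]; grind
    · rw [hqq]; exact hq
  apply Nat.card_eq_of_bijective
    (fun π => ⟨Equiv.swap X (π.1 X) * π.1, by simp, by
      exact invol_swap _ _ _ rfl (π.2.1.1 X) π.2.1.1, by
      obtain ⟨π, ⟨h1, h2, h3⟩, h4⟩ := π
      obtain ⟨k1, k2, k3⟩ := key π h1 h2 h3 h4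
      refine core_fwd π ⇑(Equiv.swap X (π X) * π : Equiv.Perm (Fin (n+1))) X (π X) k1 h1 rfl (h1 X) (by simp) ?_ ?_ k2 k3 ?_
      · simp [h1 X]
      · intro i hi hj; exact swap_other π _ _ rfl (h1 X) i hi hj
      · intro i j l a b c d; exact h2 ⟨i, j, l, a, b, c, d⟩
      , by
      obtain ⟨π, ⟨h1, h2, h3⟩, h4⟩ := π
      obtain ⟨k1, k2, k3⟩ := key π h1 h2 h3 h4
      simp only
      rw [fixed_swap π X (π X) k1.ne rfl (h1 X), h3]⟩ :
      {π : Equiv.Perm (Fin (n+1)) // (IsInvolution π ∧ Avoids132 π ∧ fixedPts π = k) ∧ ¬ π C = C} →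
      {π : Equiv.Perm (Fin (n+1)) // π X = X ∧ IsInvolution π ∧ Av132Off X π ∧ fixedPts π = k + 2})
  constructor
  · rintro ⟨π, ⟨h1, h2, h3⟩, h4⟩ ⟨ρ, ⟨g1, g2, g3⟩, g4⟩ h
    have h := congrArg Subtype.val h
    simp only at h
    obtain ⟨k1, k2, k3⟩ := key π h1 h2 h3 h4
    obtain ⟨l1, l2, l3⟩ := key ρ g1 g2 g3 g4
    have hp : ¬ π X < ρ X := by
      intro hlt
      apply l3 _ hlt
      rw [← swap_other ρ X (ρ X) rfl (g1 X) (π X) k1.ne' hlt.ne, ← h]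
      simp [h1 X]
    have hp' : ¬ ρ X < π X := by
      intro hlt
      apply k3 _ hlt
      rw [← swap_other π X (π X) rfl (h1 X) (ρ X) l1.ne' hlt.ne, h]
      simp [g1 X]
    have : π X = ρ X := le_antisymm (not_lt.1 hp') (not_lt.1 hp)
    rw [this] at h
    exact Subtype.ext (mul_left_cancel h)
  · rintro ⟨τ, h1, h2, h3, h4⟩
    have ho := openers_132x τ h2 X h1 h3 (by rw [h4]; simp [hX]; omega)
    have hne : ((Finset.univ.filter fun i => τ i = i).erase X).Nonempty := by
      rw [← Finset.card_pos, Finset.card_erase_of_mem (by simp [h1])]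
      unfold fixedPts at h4
      omega
    obtain ⟨p, hp, hmin⟩ := Finset.exists_min_image _ id hne
    simp only [Finset.mem_erase, Finset.mem_filter, Finset.mem_univ, true_and, id] at hp hmin
    obtain ⟨hpX, hpp⟩ := hp
    have hmin' : ∀ q, q < p → q ≠ X → τ q ≠ q := by
      intro q hq hqX hqq
      exact absurd (hmin q ⟨hqX, hqq⟩) (not_le.2 hq)
    have hXp : X < p := by have := ho p; grind
    have e1 : (Equiv.swap X p * τ) X = p := by simp [h1]
    have e2 : (Equiv.swap X p * τ) p = X := by simp [hpp]
    have e3 : Equiv.swap X p * (Equiv.swap X p * τ) = τ := by simp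
    have e4 := swap_other' τ X p h1 hpp
    refine ⟨⟨Equiv.swap X p * τ, ⟨invol_swap' τ X p h1 hpp h2, ?_, ?_⟩, ?_⟩, ?_⟩
    · rintro ⟨i, j, l, a, b, c, d⟩
      exact core_bwd _ τ X p hXp h2 e1 e2 h1 hpp e4 ho hmin' h3 i j l a b c d
    · have := fixed_swap _ X p hXp.ne e1 e2
      rw [e3, h4] at this
      omega
    · have hCX : X < C := (hXC2 C).2 le_rfl
      by_cases hCp : C = p
      · rw [hCp, e2]; exact hXp.ne
      · rw [e4 C hCX.ne' hCp]
        exact hmin' C (lt_of_le_of_ne ((hXC2 p).1 hXp) hCp) hCX.ne'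
    · apply Subtype.ext
      simp only [e1]
      exact e3

theorem i132_zero (n k : ℕ) (h : ∀ c, n ≠ 2 * c + k) : iCount132 n k = 0 := by
  apply card_zero
  rintro π ⟨h1, _, h3⟩
  have := count_openers π h1
  rw [h3] at this
  exact h _ this

theorem fixed_id {k : ℕ} (π : Equiv.Perm (Fin k)) (h : fixedPts π = k) (i : Fin k) : π i = i := by
  have h1 : (Finset.univ.filter fun i => π i = i) = Finset.univ := by
    apply Finset.eq_univ_of_card
    simpa [fixedPts] using h
  have : i ∈ (Finset.univ.filter fun i => π i = i) := by rw [h1]; simp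
  simpa using this

theorem i132_D (n k c : ℕ) (hc : n + 1 = 2 * c + k) :
    Nat.card {π : Equiv.Perm (Fin (n+1)) // (IsInvolution π ∧ Avoids132 π ∧ fixedPts π = k) ∧
      ¬ π ⟨c, by omega⟩ = ⟨c, by omega⟩} = iCount132 n (k + 1) := by
  rcases c with _ | x
  · rw [i132_zero n (k+1) (by omega)]
    apply card_zero
    rintro π ⟨⟨_, _, h⟩, h4⟩
    apply h4
    apply fixed_id
    omega
  · exact case_D n k x hc

theorem i132_ballot (n : ℕ) : ∀ k, iCount132 n k = ballot n k := by
  induction n with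
  | zero =>
    intro k
    rcases k with _ | k
    · have : iCount132 0 0 = Nat.card (Equiv.Perm (Fin 0)) := by
        apply Nat.card_congr
        apply Equiv.subtypeUnivEquiv
        intro π
        refine ⟨fun i => i.elim0, ?_, by simp [fixedPts]⟩
        rintro ⟨i, _⟩; exact i.elim0
      rw [this]; simp [ballot]
    · rw [i132_zero]; rfl
      omega
  | succ n ih =>
    intro k
    by_cases hc : ∃ c, n + 1 = 2 * c + k
    · obtain ⟨c, hc⟩ := hc
      have hs := card_split (fun π : Equiv.Perm (Fin (n+1)) => IsInvolution π ∧ Avoids132 π ∧ fixedPts π = k)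
        (fun π => π ⟨c, by omega⟩ = ⟨c, by omega⟩)
      rw [i132_D n k c hc] at hs
      change iCount132 (n+1) k = _ at hs
      rw [hs]
      rcases k with _ | k
      · rw [card_zero, ih]
        · simp [ballot]
        · rintro π ⟨⟨_, _, h⟩, h4⟩
          unfold fixedPts at h
          rw [Finset.card_eq_zero] at h
          have : (⟨c, by omega⟩ : Fin (n+1)) ∈ (Finset.univ.filter fun i => π i = i) := by simpa using h4
          rw [h] at this
          simp at this
      · rw [case_U n k c hc, ih, ih]; rfl
    · push Not at hc
      rw [i132_zero _ _ hc]
      rcases k with _ | k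
      · rw [ballot, ← ih, i132_zero]
        intro c h; exact hc (c+1) (by omega)
      · rw [ballot, ← ih, ← ih, i132_zero, i132_zero]
        · intro c h; exact hc (c+1) (by omega)
        · intro c h; exact hc c (by omega)

/-! 321 side -/

noncomputable def hRun (n k s : ℕ) : ℕ :=
  Nat.card {π : Equiv.Perm (Fin n) // (IsInvolution π ∧ Avoids321 π ∧ fixedPts π = k) ∧
    ∀ i : Fin n, n ≤ i.val + s → π i < i}

def Av321Off {n : ℕ} (x : Fin n) (π : Equiv.Perm (Fin n)) : Prop :=
  ∀ i, i ≠ x → ∀ j, j ≠ x → ∀ l, l ≠ x → i < j → j < l → π l < π j → π j < π i → False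

theorem extP_321 {n : ℕ} (x : Fin (n+1)) (σ : Equiv.Perm (Fin n)) :
    Avoids321 σ ↔ Av321Off x (extP x σ) := by
  unfold Avoids321 Av321Off
  simp only [extP_forall, extP_succAbove, Fin.succAbove_lt_succAbove_iff]
  push Not
  constructor
  · intro h i j l h1 h2 h3 h4; exact absurd h4 (not_lt.2 (h i j l h1 h2 h3))
  · intro h i j l h1 h2 h3; by_contra h4; exact h i j l h1 h2 h3 (not_le.1 h4)

theorem hRun_zero (n k : ℕ) : hRun n k 0 = iCount321 n k := by
  apply card_iff
  intro π
  constructor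
  · exact fun h => h.1
  · exact fun h => ⟨h, fun i hi => by omega⟩

theorem case_last (n k : ℕ) :
    Nat.card {π : Equiv.Perm (Fin (n+1)) // (IsInvolution π ∧ Avoids321 π ∧ fixedPts π = k + 1) ∧
      π (Fin.last n) = Fin.last n} = iCount321 n k := by
  unfold iCount321
  rw [card_ext (Fin.last n) _ (fun π => IsInvolution π ∧ Av321Off (Fin.last n) π ∧ fixedPts π = k + 1)]
  · apply card_iff
    intro π
    constructor
    · rintro ⟨⟨h1, h2, h3⟩, h4⟩
      exact ⟨h4, h1, fun i _ j _ l _ a b c d => h2 ⟨i, j, l, a, b, c, d⟩, h3⟩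
    · rintro ⟨h4, h1, h2, h3⟩
      refine ⟨⟨h1, ?_, h3⟩, h4⟩
      rintro ⟨i, j, l, a, b, c, d⟩
      have hl := Fin.le_last l
      have hi := Fin.le_last (π i)
      have hj := Fin.le_last (π j)
      by_cases e3 : l = Fin.last n
      · grind
      exact h2 i (by grind) j (by grind) l e3 a b c d
  · intro σ
    rw [← extP_invol, ← extP_321, extP_fixed]
    simp

theorem core321 {α : Type*} [LinearOrder α] (f g : α → α) (a z : α) (haz : a < z) (hz : ∀ i, i ≤ z)
    (hI : ∀ i, g (g i) = i) (fa : f a = z) (fz : f z = a) (ga : g a = a) (gz : g z = z)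
    (hg : ∀ i, i ≠ a → i ≠ z → f i = g i)
    (hcl : ∀ i, a < i → i ≠ z → g i < i)
    (hA : ∀ i, i ≠ a → i ≠ z → ∀ j, j ≠ a → j ≠ z → ∀ l, l ≠ a → l ≠ z →
      i < j → j < l → g l < g j → g j < g i → False) :
    ∀ i j l, i < j → j < l → f l < f j → f j < f i → False := by
  have hne : ∀ q, q ≠ a → g q ≠ a := by grind
  have hne' : ∀ q, q ≠ z → g q ≠ z := by grind
  have hcl' : ∀ q, a < q → q ≠ z → g q < a := by
    intro q h1 h2
    have h3 := hcl q h1 h2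
    have h4 := hcl (g q)
    rw [hI] at h4
    have := hne q
    grind
  intro i j l hij hjl h1 h2
  have z1 := hz i
  have z2 := hz j
  have z3 := hz l
  have z4 := hz (f i)
  have z5 := hz (f j)
  by_cases e1 : l = z
  · have e2 : j ≠ a := by grind
    have e3 : i ≠ a := by
      rintro rfl
      have h3 := hcl' j hij (by grind)
      rw [e1, fz, hg j e2 (by grind)] at h1
      exact lt_asymm h1 h3
    have e4 : j ≠ z := by grind
    have e5 : i ≠ z := by grind
    rw [hg i e3 e5, hg j e2 e4] at h2
    rw [e1, fz, hg j e2 e4] at h1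
    have h3 : j < a := by have := hcl' j; grind
    exact hA i e3 e5 j e2 e4 (g j) (hne j e2) (hne' j e4) hij (by grind) (by rw [hI]; grind) h2
  have e2 : j ≠ z := by grind
  have e3 : i ≠ z := by grind
  have e4 : l ≠ a := by grind
  have e5 : j ≠ a := by grind
  rw [hg l e4 e1, hg j e5 e2] at h1
  rw [hg j e5 e2] at h2
  by_cases e6 : i = a
  · subst e6
    have h3 := hcl' j hij e2
    exact hA (g l) (hne l e4) (hne' l e1) (g j) (hne j e5) (hne' j e2) j e5 e2 h1 (by grind)
      (by rw [hI]; grind) (by rw [hI, hI]; grind)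
  rw [hg i e6 e3] at h2
  exact hA i e6 e3 j e5 e2 l e4 e1 hij hjl h1 h2

theorem case_arc (m k s : ℕ) (hs : s ≤ m) :
    Nat.card {π : Equiv.Perm (Fin (m+2)) // ((IsInvolution π ∧ Avoids321 π ∧ fixedPts π = k) ∧
      ∀ i : Fin (m+2), m + 2 ≤ i.val + (s + 1) → π i < i) ∧
      ¬ π ⟨m - s, by omega⟩ < ⟨m - s, by omega⟩} = hRun m k s := by
  unfold hRun
  set a' : Fin (m+1) := ⟨m - s, by omega⟩ with ha'
  set z : Fin (m+2) := Fin.last (m+1) with hz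
  set a : Fin (m+2) := ⟨m - s, by omega⟩ with ha
  have haa : a = z.succAbove a' := by simp [hz, ha, ha']
  have haz : a < z := by rw [Fin.lt_def]; simp only [ha, hz, Fin.val_last]; omega
  have hzl : ∀ i, i ≤ z := Fin.le_last
  rw [card_ext a' _ (fun π => IsInvolution π ∧ Av321Off a' π ∧ fixedPts π = k + 1 ∧
    ∀ i, i ≠ a' → a' < i → π i < i)]
  swap
  · intro σ
    rw [← extP_invol, ← extP_321, extP_fixed, extP_forall]
    simp only [extP_succAbove, Fin.succAbove_lt_succAbove_iff, and_assoc, add_left_inj]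
    have : ∀ i : Fin m, a' < a'.succAbove i ↔ m ≤ i.val + s := by
      intro i
      rw [Fin.lt_succAbove_iff_le_castSucc, Fin.le_def]
      change m - s ≤ i.val ↔ _
      omega
    simp only [this]
  rw [card_ext z _ (fun π => (π a = a ∧ IsInvolution π ∧ (∀ i, i ≠ a → i ≠ z → ∀ j, j ≠ a → j ≠ z → ∀ l, l ≠ a → l ≠ z →
      i < j → j < l → π l < π j → π j < π i → False) ∧ fixedPts π = k + 2 ∧
    ∀ i, i ≠ z → a < i → π i < i))]
  swap
  · intro σ
    have hf : ∀ P : Fin (m+2) → Prop, (∀ i, i ≠ a → i ≠ z → P i) ↔ ∀ i, i ≠ a' → P (z.succAbove i) := by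
      intro P
      have := extP_forall z (fun i => i ≠ a → P i)
      constructor
      · intro h i hi
        exact this.1 (fun i h1 h2 => h i h2 h1) i (by rw [haa]; exact fun h => hi (Fin.succAbove_right_injective h))
      · intro h i h1 h2
        exact this.2 (fun i hi => h i (by rintro rfl; exact hi haa.symm)) i h2 h1
    have h9 := extP_forall z (fun i => a < i → extP z σ i < i)
    beta_reduce at h9
    rw [← extP_invol, extP_fixed, h9]
    simp only [hf]
    unfold Av321Off
    simp only [haa, extP_succAbove, Fin.succAbove_lt_succAbove_iff, Fin.succAbove_right_inj]
    constructor
    · rintro ⟨h1, h2, h3, h4, h5⟩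
      exact ⟨h1, h2, h3, by omega, fun i hi => h5 i hi.ne' hi⟩
    · rintro ⟨h1, h2, h3, h4, h5⟩
      exact ⟨h1, h2, h3, by omega, fun i _ hi => h5 i hi⟩
  have hcl0 : ∀ i : Fin (m+2), m + 2 ≤ i.val + (s + 1) ↔ a < i := by
    intro i; rw [Fin.lt_def]; change _ ↔ m - s < i.val; omega
  simp only [hcl0]
  apply Nat.card_congr
  refine Equiv.subtypeEquiv (Equiv.mulLeft (Equiv.swap a z)) ?_
  intro π
  simp only [Equiv.coe_mulLeft]
  constructor
  · rintro ⟨⟨⟨h1, h2, h3⟩, h4⟩, h5⟩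
    have hI : ∀ i, π (π i) = i := h1
    have h6 := h4 z haz
    have h7 : π z = a := by
      rcases lt_trichotomy (π z) a with h | h | h
      · exfalso
        apply h2
        refine ⟨π z, a, z, h, haz, lt_of_lt_of_le h (not_lt.1 h5), ?_⟩
        rw [hI]
        refine lt_of_le_of_ne (hzl _) ?_
        intro h8
        rw [← h8, hI] at h
        exact lt_irrefl _ h
      · exact h
      · have h8 := h4 (π z) h
        rw [hI] at h8
        exact absurd h8 (lt_asymm h6)
    have h8 : π a = z := by rw [← h7, hI]
    have ho := swap_other π a z h8 h7
    refine ⟨by simp [h7], by simp [h8], invol_swap π a z h8 h7 h1, ?_, ?_, ?_⟩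
    · intro i i1 i2 j j1 j2 l l1 l2 hij hjl q1 q2
      rw [ho i i1 i2, ho j j1 j2] at q2
      rw [ho l l1 l2, ho j j1 j2] at q1
      exact h2 ⟨i, j, l, hij, hjl, q1, q2⟩
    · rw [fixed_swap π a z haz.ne h8 h7, h3]
    · intro i i1 i2
      rw [ho i i2.ne' i1]
      exact h4 i i2
  · obtain ⟨τ, rfl⟩ : ∃ τ, π = Equiv.swap a z * τ := ⟨Equiv.swap a z * π, by simp⟩
    rw [Equiv.swap_mul_self_mul]
    rintro ⟨h1, h2, h3, h4, h5, h6⟩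
    have e1 : (Equiv.swap a z * τ) a = z := by simp [h2]
    have e2 : (Equiv.swap a z * τ) z = a := by simp [h1]
    have e4 := swap_other' τ a z h2 h1
    refine ⟨⟨⟨invol_swap' τ a z h2 h1 h3, ?_, ?_⟩, ?_⟩, ?_⟩
    · rintro ⟨i, j, l, q1, q2, q3, q4⟩
      exact core321 _ τ a z haz hzl h3 e1 e2 h2 h1 e4 (fun i h h' => h6 i h' h) h4 i j l q1 q2 q3 q4
    · have := fixed_swap _ a z haz.ne e1 e2
      rw [Equiv.swap_mul_self_mul, h5] at this
      omega
    · intro i hi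
      by_cases hiz : i = z
      · rw [hiz, e2]; exact haz
      · rw [e4 i hi.ne' hiz]; exact h6 i hiz hi
    · rw [e1]; exact lt_asymm haz

theorem hRun_full (n k : ℕ) : hRun (n+1) k (n+1) = 0 := by
  apply card_zero
  rintro π ⟨_, h⟩
  have := h 0 (by simp)
  exact absurd this (Fin.not_lt_zero _)

theorem hRun_succ (n k s : ℕ) (hs : s ≤ n) : hRun (n+1) k s = hRun (n+1) k (s+1) +
    Nat.card {π : Equiv.Perm (Fin (n+1)) // ((IsInvolution π ∧ Avoids321 π ∧ fixedPts π = k) ∧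
      ∀ i : Fin (n+1), n + 1 ≤ i.val + s → π i < i) ∧
      ¬ π ⟨n - s, by omega⟩ < ⟨n - s, by omega⟩} := by
  unfold hRun
  rw [card_split _ (fun π => π ⟨n - s, by omega⟩ < ⟨n - s, by omega⟩)]
  congr 1
  apply card_iff
  intro π
  constructor
  · rintro ⟨⟨h1, h2⟩, h3⟩
    refine ⟨h1, ?_⟩
    intro i hi
    by_cases h : n + 1 ≤ i.val + s
    · exact h2 i h
    · have : i = ⟨n - s, by omega⟩ := Fin.ext (by simp only; omega)
      rw [this]; exact h3
  · rintro ⟨h1, h2⟩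
    exact ⟨⟨h1, fun i hi => h2 i (by omega)⟩, h2 _ (by simp only; omega)⟩

theorem hRun_ballot (n : ℕ) : ∀ d k s, s + d = n → hRun n k s = ballot d (k + s) := by
  induction n using Nat.strong_induction_on with
  | _ n ih =>
    rcases n with _ | n
    · intro d k s h
      obtain ⟨rfl, rfl⟩ : s = 0 ∧ d = 0 := by omega
      rw [hRun_zero]
      rcases k with _ | k
      · have : iCount321 0 0 = Nat.card (Equiv.Perm (Fin 0)) := by
          apply Nat.card_congr
          apply Equiv.subtypeUnivEquiv
          intro π
          refine ⟨fun i => i.elim0, ?_, by simp [fixedPts]⟩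
          rintro ⟨i, _⟩; exact i.elim0
        rw [this]; simp [ballot]
      · apply card_zero
        rintro π ⟨_, _, h⟩
        simp [fixedPts] at h
    · intro d
      induction d with
      | zero =>
        intro k s h
        obtain rfl : s = n + 1 := by omega
        rw [hRun_full]; rfl
      | succ d ihd =>
        intro k s h
        rw [hRun_succ n k s (by omega), ihd k (s+1) (by omega)]
        rcases s with _ | s
        · have hlast : Nat.card {π : Equiv.Perm (Fin (n+1)) // ((IsInvolution π ∧ Avoids321 π ∧ fixedPts π = k) ∧
              ∀ i : Fin (n+1), n + 1 ≤ i.val + 0 → π i < i) ∧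
              ¬ π ⟨n - 0, by omega⟩ < ⟨n - 0, by omega⟩} =
              Nat.card {π : Equiv.Perm (Fin (n+1)) // (IsInvolution π ∧ Avoids321 π ∧ fixedPts π = k) ∧
                π (Fin.last n) = Fin.last n} := by
            apply card_iff
            intro π
            change (_ ∧ ¬ π (Fin.last n) < Fin.last n) ↔ _
            constructor
            · rintro ⟨⟨h1, _⟩, h2⟩
              exact ⟨h1, le_antisymm (Fin.le_last _) (not_lt.1 h2)⟩
            · rintro ⟨h1, h2⟩
              exact ⟨⟨h1, fun i hi => by omega⟩, by rw [h2]; exact lt_irrefl _⟩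
          rw [hlast]
          obtain rfl : d = n := by omega
          rcases k with _ | k
          · rw [card_zero]
            · simp [ballot]
            · rintro π ⟨⟨_, _, h⟩, h4⟩
              unfold fixedPts at h
              rw [Finset.card_eq_zero] at h
              have : Fin.last d ∈ (Finset.univ.filter fun i => π i = i) := by simpa using h4
              rw [h] at this
              simp at this
          · rw [case_last, ← hRun_zero, ih d (by omega) d k 0 (by omega)]
            simp only [ballot, add_zero]
            ring_nf
        · obtain ⟨m, rfl⟩ : ∃ m, n = m + 1 := ⟨n - 1, by omega⟩
          have hc := case_arc m k s (by omega)
          have e : m + 1 - (s + 1) = m - s := by omega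
          simp only [e]
          rw [hc, ih m (by omega) d k s (by omega)]
          rw [← add_assoc k s 1, ballot]
          ring_nf

/-- For all `n ≥ 1` and `0 ≤ k ≤ n`, `i_n^k(132) = i_n^k(213) = i_n^k(321)`. -/
theorem statement5 (n k : ℕ) (hn : 1 ≤ n) (hk : k ≤ n) :
    iCount132 n k = iCount213 n k ∧ iCount213 n k = iCount321 n k := by
  have h : iCount132 n k = iCount321 n k := by
    rw [i132_ballot, ← hRun_zero, hRun_ballot n n k 0 (by omega)]; rfl
  exact ⟨c132_213 n k, (c132_213 n k).symm.trans h⟩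
end

section
/- For every n ≥ 1, a permutation π of {1,2,…,n} avoids both of the patterns 231 and 312 if and only if π is an involution that avoids the pattern 231. -/
/-- A permutation of `Fin n` avoids the pattern 231. -/
def Avoids231 {n : ℕ} (π : Equiv.Perm (Fin n)) : Prop :=
  ¬ ∃ i₁ i₂ i₃ : Fin n, i₁ < i₂ ∧ i₂ < i₃ ∧ (π i₃ < π i₁ ∧ π i₁ < π i₂)

/-- A permutation of `Fin n` avoids the pattern 312. -/
def Avoids312 {n : ℕ} (π : Equiv.Perm (Fin n)) : Prop :=
  ¬ ∃ i₁ i₂ i₃ : Fin n, i₁ < i₂ ∧ i₂ < i₃ ∧ (π i₂ < π i₃ ∧ π i₃ < π i₁)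

theorem aux_consec {n : ℕ} (π : Equiv.Perm (Fin n)) (h1 : Avoids231 π) (h2 : Avoids312 π)
    (i j : Fin n) (hij : (j : ℕ) = i + 1) (h : π j < π i) :
    (π i : ℕ) = π j + 1 := by
  by_contra hne
  have hlt : (π j : ℕ) < π i := h
  have hv : (π j : ℕ) + 1 < n := by have := (π i).isLt; omega
  obtain ⟨p, hp⟩ := π.surjective ⟨(π j : ℕ) + 1, hv⟩
  have hp' : (π p : ℕ) = π j + 1 := by rw [hp]
  have hpi : p ≠ i := by rintro rfl; omega
  have hpj : p ≠ j := by rintro rfl; omega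
  have hpi' : (p : ℕ) ≠ i := fun e => hpi (Fin.ext e)
  have hpj' : (p : ℕ) ≠ j := fun e => hpj (Fin.ext e)
  rcases lt_or_gt_of_ne hpi' with hl | hl
  · exact h1 ⟨p, i, j, hl, by rw [Fin.lt_def]; omega, by rw [Fin.lt_def]; omega,
      by rw [Fin.lt_def]; omega⟩
  · exact h2 ⟨i, j, p, by rw [Fin.lt_def]; omega, by rw [Fin.lt_def]; omega,
      by rw [Fin.lt_def]; omega, by rw [Fin.lt_def]; omega⟩

theorem aux_inv {n : ℕ} (π : Equiv.Perm (Fin n)) (h1 : Avoids231 π) (h2 : Avoids312 π)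
    (d : ℕ) : ∀ i j : Fin n, (j : ℕ) = i + d + 1 → π j < π i →
    (i : ℕ) + π i = j + π j := by
  induction d with
  | zero =>
    intro i j hij h
    have := aux_consec π h1 h2 i j (by omega) h
    omega
  | succ d ih =>
    intro i j hij h
    have hs : (i : ℕ) + 1 < n := by have := j.isLt; omega
    obtain ⟨s, hs'⟩ : ∃ s : Fin n, (s : ℕ) = i + 1 := ⟨⟨_, hs⟩, rfl⟩
    have his : i < s := by rw [Fin.lt_def]; omega
    have hsj : s < j := by rw [Fin.lt_def]; omega
    have a : π s < π i := by
      by_contra hc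
      have : π i ≠ π s := fun e => his.ne (π.injective e)
      exact h1 ⟨i, s, j, his, hsj, h, lt_of_le_of_ne (not_lt.mp hc) this⟩
    have b : π j < π s := by
      by_contra hc
      have : π s ≠ π j := fun e => hsj.ne (π.injective e)
      exact h2 ⟨i, s, j, his, hsj, lt_of_le_of_ne (not_lt.mp hc) this, h⟩
    have c := aux_consec π h1 h2 i s hs' a
    have e := ih s j (by omega) b
    omega

theorem aux_inv' {n : ℕ} (π : Equiv.Perm (Fin n)) (h1 : Avoids231 π) (h2 : Avoids312 π)
    (i j : Fin n) (hij : i < j) (h : π j < π i) : (i : ℕ) + π i = j + π j := by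
  rw [Fin.lt_def] at hij
  exact aux_inv π h1 h2 (j - i - 1) i j (by omega) h

/-- For every `n ≥ 1`, a permutation of `{1, …, n}` avoids both 231 and 312 if and only
if it is an involution avoiding 231. -/
theorem statement8 (n : ℕ) (hn : 1 ≤ n) (π : Equiv.Perm (Fin n)) :
    (Avoids231 π ∧ Avoids312 π) ↔ (IsInvolution π ∧ Avoids231 π) := by
  constructor
  · rintro ⟨h1, h2⟩
    refine ⟨fun i => ?_, h1⟩
    rcases lt_trichotomy i (π i) with hl | he | hl
    · by_cases hk : π (π i) < π i
      · have := aux_inv' π h1 h2 i (π i) hl hk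
        exact Fin.ext (by omega)
      · exfalso
        have hne : π i ≠ π (π i) := fun e => hl.ne (π.injective e)
        have hk' : π i < π (π i) := lt_of_le_of_ne (not_lt.mp hk) hne
        have hc : (Finset.Ici (π i)).card ≤ (Finset.Ioi (π i)).card := by
          refine Finset.card_le_card_of_injOn π ?_ π.injective.injOn
          intro p hp
          have hp : π i ≤ p := by simpa using hp
          have : π i < π p := by
            rcases hp.eq_or_lt with e | hp
            · rw [← e]; exact hk'
            · by_contra hc
              have : π p ≠ π i := fun e => (hl.trans hp).ne (π.injective e).symm
              exact h1 ⟨i, π i, p, hl, hp, lt_of_le_of_ne (not_lt.mp hc) this, hk'⟩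
          simpa using this
        rw [Fin.card_Ici, Fin.card_Ioi] at hc
        have := (π i).isLt
        omega
    · rw [← he, ← he]
    · by_cases hk : π i < π (π i)
      · have := aux_inv' π h1 h2 (π i) i hl hk
        exact Fin.ext (by omega)
      · exfalso
        have hne : π (π i) ≠ π i := fun e => hl.ne (π.injective e)
        have hk' : π (π i) < π i := lt_of_le_of_ne (not_lt.mp hk) hne
        have hc : (Finset.Iic (π i)).card ≤ (Finset.Iio (π i)).card := by
          refine Finset.card_le_card_of_injOn π ?_ π.injective.injOn
          intro p hp
          have hp : p ≤ π i := by simpa using hp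
          have : π p < π i := by
            rcases hp.eq_or_lt with e | hp
            · rw [e]; exact hk'
            · by_contra hc
              have : π i ≠ π p := fun e => (hp.trans hl).ne (π.injective e).symm
              exact h2 ⟨p, π i, i, hp, hl, hk', lt_of_le_of_ne (not_lt.mp hc) this⟩
          simpa using this
        rw [Fin.card_Iic, Fin.card_Iio] at hc
        omega
  · rintro ⟨hi, h1⟩
    refine ⟨h1, ?_⟩
    rintro ⟨a, b, c, hab, hbc, h, h'⟩
    exact h1 ⟨π b, π c, π a, h, h', by rw [hi, hi]; exact hab, by rw [hi, hi]; exact hbc⟩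
end
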